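/- arXiv:1301.3552 — 2 statements merged into one kernel-verified Lean document; each statement's English description precedes it below -/
import Mathlib

section
/- Let (A,B,C,0) be a minimal state-space realization of the strictly proper m×m transfer function R(s) = C(sI − A)⁻¹B. Then the system is negative imaginary if and only if: (a) 0 is not an eigenvalue of A, and (b) F(s) := s·R(s) is positive real, i.e., A has no eigenvalue with positive real part and F(s) + F(s)ᴴ ⪰ 0 for every s ∈ ℂ with Re(s) > 0. -/
open Matrix Filter Topology ComplexOrder

/-- The (complex) eigenvalues of a real square matrix. -/
noncomputable def eigs {k : Type*} [Fintype k] [DecidableEq k] (A : Matrix k k ℝ) : Set ℂ :=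
  spectrum ℂ (A.map Complex.ofReal)

/-- A real square matrix is Hurwitz if all of its (complex) eigenvalues have negative real
part. -/
noncomputable def IsHurwitz {k : Type*} [Fintype k] [DecidableEq k] (A : Matrix k k ℝ) : Prop :=
  ∀ μ ∈ eigs A, μ.re < 0

/-- Transfer function `R(s) = C (sI - A)⁻¹ B + D` of a real state-space system, as a
complex matrix. -/
noncomputable def tf {n m : ℕ} (A : Matrix (Fin n) (Fin n) ℝ) (B : Matrix (Fin n) (Fin m) ℝ)
    (C : Matrix (Fin m) (Fin n) ℝ) (D : Matrix (Fin m) (Fin m) ℝ) (s : ℂ) :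
    Matrix (Fin m) (Fin m) ℂ :=
  C.map (Complex.ofReal) * (s • (1 : Matrix (Fin n) (Fin n) ℂ) - A.map Complex.ofReal)⁻¹ *
      B.map Complex.ofReal + D.map Complex.ofReal

/-- A state-space realization `(A,B,C,D)` is minimal if the controllability matrix and the
observability matrix both have rank `n`. -/
def IsMinimal {n m : ℕ} (A : Matrix (Fin n) (Fin n) ℝ) (B : Matrix (Fin n) (Fin m) ℝ)
    (C : Matrix (Fin m) (Fin n) ℝ) : Prop :=
  (Matrix.of fun (i : Fin n) (p : Fin n × Fin m) => (A ^ (p.1 : ℕ) * B) i p.2).rank = n ∧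
  (Matrix.of fun (p : Fin n × Fin m) (i : Fin n) => (C * A ^ (p.1 : ℕ)) p.2 i).rank = n

/-- The system `(A,B,C,D)` is negative imaginary (NI). -/
noncomputable def IsNI {n m : ℕ} (A : Matrix (Fin n) (Fin n) ℝ) (B : Matrix (Fin n) (Fin m) ℝ)
    (C : Matrix (Fin m) (Fin n) ℝ) (D : Matrix (Fin m) (Fin m) ℝ) : Prop :=
  (∀ μ ∈ eigs A, μ ≠ 0 ∧ μ.re ≤ 0) ∧
  (∀ ω : ℝ, 0 < ω → (Complex.I * ω) ∉ eigs A →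
    (Complex.I • (tf A B C D (Complex.I * ω) - (tf A B C D (Complex.I * ω))ᴴ)).PosSemidef) ∧
  (∀ ω : ℝ, 0 < ω → (Complex.I * ω) ∈ eigs A →
    ∃ K : Matrix (Fin m) (Fin m) ℂ,
      Tendsto (fun s : ℂ => (s - Complex.I * ω) • Complex.I • tf A B C D s)
        (𝓝[≠] (Complex.I * ω)) (𝓝 K) ∧ K.PosSemidef)

/-- The system `(A,B,C,D)` is strictly negative imaginary (SNI). -/
noncomputable def IsSNI {n m : ℕ} (A : Matrix (Fin n) (Fin n) ℝ) (B : Matrix (Fin n) (Fin m) ℝ)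
    (C : Matrix (Fin m) (Fin n) ℝ) (D : Matrix (Fin m) (Fin m) ℝ) : Prop :=
  IsHurwitz A ∧
  (∀ ω : ℝ, 0 < ω →
    (Complex.I • (tf A B C D (Complex.I * ω) - (tf A B C D (Complex.I * ω))ᴴ)).PosDef)

/-!
For a fixed vector `x`, the scalar function `f s = xᴴ (s R(s)) x` is rational with a finite limit
at infinity. On the positive imaginary axis `f (jω) = jω xᴴ R(jω) x`, so the negative imaginary
condition says that `Re f ≥ 0` there; the residue of `f` at a pole `jω` is `ω xᴴ K₀ x`. As `R` has
real coefficients, both facts extend to the negative axis by conjugation.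

If `f` has only simple imaginary poles with residues `r ≥ 0`, the terms `r / (s - jω)` have
nonnegative real part in the right half-plane, and the maximum principle for `exp (-f)` gives
`Re f ≥ 0` there. Conversely, if `Re f ≥ 0` in the right half-plane and `f ~ c / (s - jω) ^ k`,
then approaching `jω` along the ray of angle `-θ` shows `Re (c e^{ikθ}) ≥ 0` for all `|θ| < π / 2`.
This range of arguments is too wide unless `k = 1`, and then it forces `c ≥ 0`.
-/

open Bornology Set Real
open scoped ComplexConjugate

theorem re_nonneg_of_eventually_nhdsWithin_frontier {Ω : Set ℂ} {f : ℂ → ℂ} (hΩ : IsOpen Ω)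
    (hf : DifferentiableOn ℂ f Ω)
    (hfr : ∀ p ∈ frontier Ω, ∀ ε > 0, ∀ᶠ s in 𝓝[Ω] p, -ε ≤ (f s).re)
    (hinf : ∀ ε > 0, ∀ᶠ s in cobounded ℂ ⊓ 𝓟 Ω, -ε ≤ (f s).re) {z : ℂ} (hz : z ∈ Ω) :
    0 ≤ (f z).re := by
  refine le_of_forall_pos_le_add fun ε hε ↦ ?_
  by_contra! hlt
  set U : Set ℂ := Ω ∩ f ⁻¹' {w | w.re < -ε}
  have hU_open : IsOpen U :=
    hf.continuousOn.isOpen_inter_preimage hΩ (isOpen_lt Complex.continuous_re continuous_const)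
  have hU_bdd : IsBounded U := by
    rw [isBounded_def]
    filter_upwards [eventually_inf_principal.1 (hinf ε hε)] with s hs hsU
    exact (hs hsU.1).not_gt hsU.2
  have hU_closure : closure U ⊆ Ω := by
    intro p hp
    by_contra hpΩ
    have hp_frontier : p ∈ frontier Ω :=
      ⟨closure_mono inter_subset_left hp, fun h ↦ hpΩ (interior_subset h)⟩
    have hfreq : ∃ᶠ s in 𝓝 p, s ∈ U := mem_closure_iff_frequently.1 hp
    obtain ⟨s, hsU, hs⟩ :=
      (hfreq.and_eventually (eventually_nhdsWithin_iff.1 (hfr p hp_frontier ε hε))).exists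
    exact (hs hsU.1).not_gt hsU.2
  have hU_frontier : ∀ s ∈ frontier U, ‖Complex.exp (-f s)‖ ≤ rexp ε := by
    intro s hs
    have hsU : s ∉ U := hU_open.frontier_eq ▸ hs |>.2
    have hle : -ε ≤ (f s).re := not_lt.1 fun h ↦ hsU ⟨hU_closure hs.1, h⟩
    rw [Complex.norm_exp, Complex.neg_re, Real.exp_le_exp]
    linarith
  have hle : ‖Complex.exp (-f z)‖ ≤ rexp ε :=
    Complex.norm_le_of_forall_mem_frontier_norm_le hU_bdd
      ((hf.mono hU_closure).neg.cexp.diffContOnCl) hU_frontier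
      (subset_closure ⟨hz, by simpa using by linarith⟩)
  rw [Complex.norm_exp, Complex.neg_re, Real.exp_le_exp] at hle
  linarith

/-- `f` has at `p` at most a simple pole, whose residue is a nonnegative real number
(the order of `ℂ` makes `0 ≤ r` say that `r` is real): the condition that positive realness
imposes at a boundary point of the half-plane. A removable singularity has `r = 0`. -/
def HasNonnegResidueAt (f : ℂ → ℂ) (p : ℂ) : Prop :=
  ∃ r : ℂ, 0 ≤ r ∧ Tendsto (fun s ↦ (s - p) * f s) (𝓝[≠] p) (𝓝 r)

theorem hasNonnegResidueAt_of_continuousAt {f : ℂ → ℂ} {p : ℂ} (hf : ContinuousAt f p) :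
    HasNonnegResidueAt f p := by
  have h : ContinuousAt (fun s ↦ (s - p) * f s) p := by fun_prop
  exact ⟨0, le_rfl, by simpa using h.tendsto.mono_left nhdsWithin_le_nhds⟩

theorem HasNonnegResidueAt.conj {f : ℂ → ℂ} {p : ℂ} (hf : HasNonnegResidueAt f (conj p)) :
    HasNonnegResidueAt (fun s ↦ conj (f (conj s))) p := by
  obtain ⟨r, hr, hlim⟩ := hf
  have hconj : Tendsto (starRingEnd ℂ) (𝓝[≠] p) (𝓝[≠] (conj p)) :=
    Complex.continuous_conj.continuousAt.continuousWithinAt.tendsto_nhdsWithin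
      fun _ hs h ↦ hs ((starRingEnd ℂ).injective h)
  refine ⟨conj r, star_nonneg_iff.2 hr, ?_⟩
  simpa [Function.comp_def] using (Complex.continuous_conj.tendsto r).comp (hlim.comp hconj)

theorem exists_tendsto_sub_div_of_tendsto_sub_mul {f : ℂ → ℂ} {p r : ℂ} (hf : MeromorphicAt f p)
    (hr : Tendsto (fun s ↦ (s - p) * f s) (𝓝[≠] p) (𝓝 r)) :
    ∃ L, Tendsto (fun s ↦ f s - r / (s - p)) (𝓝[≠] p) (𝓝 L) := by
  have hmul : MeromorphicAt (fun s ↦ (s - p) * f s) p := by fun_prop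
  obtain ⟨g, hg, hfg⟩ := hmul.meromorphicOrderAt_nonneg_iff.1
    ((tendsto_nhds_iff_meromorphicOrderAt_nonneg hmul).1 ⟨r, hr⟩)
  have hgp : g p = r := tendsto_nhds_unique
    (hg.continuousAt.tendsto.mono_left nhdsWithin_le_nhds) (hr.congr' hfg)
  refine ⟨deriv g p, (hasDerivAt_iff_tendsto_slope.1 hg.differentiableAt.hasDerivAt).congr' ?_⟩
  filter_upwards [hfg, self_mem_nhdsWithin] with s hs hsp
  have hsp' : s - p ≠ 0 := sub_ne_zero.2 hsp
  rw [slope_def_field, hgp, ← hs]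
  field_simp

theorem re_div_sub_nonneg {r p s : ℂ} (hr : 0 ≤ r) (hs : p.re ≤ s.re) : 0 ≤ (r / (s - p)).re := by
  obtain ⟨hre, him⟩ := Complex.nonneg_iff.1 hr
  have hsp : 0 ≤ (s - p).re := by simpa using hs
  rw [Complex.div_re, ← him, zero_mul, zero_div, add_zero]
  have := Complex.normSq_nonneg (s - p)
  positivity

theorem HasNonnegResidueAt.eventually_neg_le_re {f : ℂ → ℂ} {p : ℂ} (hf : MeromorphicAt f p)
    (hres : HasNonnegResidueAt f p)
    (hline : ∀ᶠ s in 𝓝[≠] p, s.re = p.re → 0 ≤ (f s).re) {ε : ℝ} (hε : 0 < ε) :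
    ∀ᶠ s in 𝓝[{s | p.re < s.re}] p, -ε ≤ (f s).re := by
  obtain ⟨r, hr, hlim⟩ := hres
  obtain ⟨L, hL⟩ := exists_tendsto_sub_div_of_tendsto_sub_mul hf hlim
  have hre : Tendsto (fun s ↦ (f s - r / (s - p)).re) (𝓝[≠] p) (𝓝 L.re) :=
    (Complex.continuous_re.tendsto L).comp hL
  have hL_nonneg : 0 ≤ L.re := by
    have hvert : Tendsto (fun t : ℝ ↦ p + t * Complex.I) (𝓝[≠] 0) (𝓝[≠] p) := by
      have hcont : ContinuousWithinAt (fun t : ℝ ↦ p + t * Complex.I) {0}ᶜ 0 := by fun_prop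
      simpa using hcont.tendsto_nhdsWithin (t := {p}ᶜ) fun t ht ↦ by simpa using ht
    refine ge_of_tendsto (hre.comp hvert) ?_
    filter_upwards [hvert.eventually hline] with t ht
    have hpole : (r / (t * Complex.I)).re = 0 := by
      simp [Complex.div_re, ← (Complex.nonneg_iff.1 hr).2]
    simpa [hpole] using ht
  have hsub : {s : ℂ | p.re < s.re} ⊆ {p}ᶜ := fun s hs h ↦ (h ▸ hs : p.re < p.re).false
  filter_upwards [(hre.mono_left (nhdsWithin_mono p hsub)).eventually_const_lt
    (show -ε < L.re by linarith), self_mem_nhdsWithin] with s hs hsp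
  have := re_div_sub_nonneg hr (le_of_lt hsp)
  rw [Complex.sub_re] at hs
  linarith

theorem re_nonneg_of_tendsto_cobounded {f : ℂ → ℂ} {L : ℂ} (hf : Tendsto f (cobounded ℂ) (𝓝 L))
    (hline : ∀ᶠ s in cofinite, s.re = 0 → 0 ≤ (f s).re) : 0 ≤ L.re := by
  have hvert : Tendsto (fun t : ℝ ↦ t * Complex.I) atTop (cobounded ℂ) := by
    rw [← tendsto_norm_atTop_iff_cobounded]
    simpa using tendsto_abs_atTop_atTop
  refine ge_of_tendsto ((Complex.continuous_re.tendsto L).comp (hf.comp hvert)) ?_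
  filter_upwards [hvert.eventually (le_cofinite ℂ hline)] with t ht
  exact ht (by simp)

theorem re_nonneg_of_hasNonnegResidueAt {f : ℂ → ℂ} {L : ℂ}
    (hf : DifferentiableOn ℂ f {s | 0 < s.re}) (hmer : ∀ p : ℂ, p.re = 0 → MeromorphicAt f p)
    (hres : ∀ p : ℂ, p.re = 0 → HasNonnegResidueAt f p)
    (hline : ∀ᶠ s in cofinite, s.re = 0 → 0 ≤ (f s).re) (hinf : Tendsto f (cobounded ℂ) (𝓝 L))
    {s : ℂ} (hs : 0 < s.re) : 0 ≤ (f s).re := by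
  refine re_nonneg_of_eventually_nhdsWithin_frontier
    (isOpen_lt continuous_const Complex.continuous_re) hf (fun p hp ε hε ↦ ?_) (fun ε hε ↦ ?_) hs
  · rw [Complex.frontier_setOfPred_lt_re] at hp
    have hp' : p.re = 0 := hp
    have := (hres p hp).eventually_neg_le_re (hmer p hp)
      (by rw [hp']; exact nhdsNE_le_cofinite p hline) hε
    rwa [hp'] at this
  · have hL : 0 ≤ L.re := re_nonneg_of_tendsto_cobounded hinf hline
    filter_upwards [inf_le_left (b := 𝓟 {s : ℂ | 0 < s.re})
      (((Complex.continuous_re.tendsto L).comp hinf).eventually_const_lt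
        (show -ε < L.re by linarith))] with s hs
    exact le_of_lt hs

theorem nonneg_and_eq_zero_of_re_mul_exp_nonneg {c : ℂ} {k : ℕ} (hk : k ≠ 0)
    (h : ∀ θ : ℝ, |θ| < π / 2 → 0 ≤ (c * Complex.exp (k * θ * Complex.I)).re) :
    0 ≤ c ∧ (2 ≤ k → c = 0) := by
  have hk' : (1 : ℝ) ≤ k := mod_cast Nat.one_le_iff_ne_zero.2 hk
  have hpi := pi_pos
  have hclosed : ∀ θ ∈ Icc (-(k * (π / 2))) (k * (π / 2)),
      0 ≤ (c * Complex.exp (θ * Complex.I)).re := by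
    rw [← closure_Ioo (by nlinarith)]
    refine closure_minimal (fun θ hθ ↦ ?_)
      (isClosed_le continuous_const (by fun_prop) :
        IsClosed {θ : ℝ | 0 ≤ (c * Complex.exp (θ * Complex.I)).re})
    have hθ' : |θ / k| < π / 2 := by
      rw [abs_div, Nat.abs_cast, div_lt_iff₀' (by linarith)]
      exact abs_lt.2 hθ
    have := h (θ / k) hθ'
    rwa [Complex.ofReal_div, Complex.ofReal_natCast, mul_div_cancel₀ _ (mod_cast hk)] at this
  have hre : ∀ θ : ℝ, (c * Complex.exp (θ * Complex.I)).re = c.re * cos θ - c.im * sin θ :=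
    fun θ ↦ by rw [Complex.mul_re, Complex.exp_ofReal_mul_I_re, Complex.exp_ofReal_mul_I_im]
  simp only [hre] at hclosed
  have him_nonpos : c.im ≤ 0 := by simpa using hclosed (π / 2) ⟨by nlinarith, by nlinarith⟩
  have him_nonneg : 0 ≤ c.im := by simpa using hclosed (-(π / 2)) ⟨by nlinarith, by nlinarith⟩
  have hre_nonneg : 0 ≤ c.re := by simpa using hclosed 0 ⟨by nlinarith, by nlinarith⟩
  have him : c.im = 0 := le_antisymm him_nonpos him_nonneg
  refine ⟨Complex.nonneg_iff.2 ⟨hre_nonneg, him.symm⟩, fun hk2 ↦ ?_⟩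
  have hk2' : (2 : ℝ) ≤ k := mod_cast hk2
  have hre_nonpos : c.re ≤ 0 := by simpa using hclosed π ⟨by nlinarith, by nlinarith⟩
  exact Complex.ext (le_antisymm hre_nonpos hre_nonneg) him

theorem nonneg_and_eq_zero_of_tendsto_sub_pow_mul {f : ℂ → ℂ} {p c : ℂ} {k : ℕ} (hk : k ≠ 0)
    (hlim : Tendsto (fun s ↦ (s - p) ^ k * f s) (𝓝[≠] p) (𝓝 c))
    (hf : ∀ᶠ s in 𝓝[{s | p.re < s.re}] p, 0 ≤ (f s).re) : 0 ≤ c ∧ (2 ≤ k → c = 0) := by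
  refine nonneg_and_eq_zero_of_re_mul_exp_nonneg hk fun θ hθ ↦ ?_
  set u : ℂ := Complex.exp (-θ * Complex.I)
  have hu : 0 < u.re := by
    simpa [u, Complex.exp_re] using cos_pos_of_mem_Ioo (abs_lt.1 hθ)
  have hray : Tendsto (fun t : ℝ ↦ p + t * u) (𝓝[>] 0) (𝓝[{s | p.re < s.re}] p) := by
    have hcont : ContinuousWithinAt (fun t : ℝ ↦ p + t * u) (Ioi 0) 0 := by fun_prop
    simpa using hcont.tendsto_nhdsWithin (t := {s | p.re < s.re})
      fun t (ht : 0 < t) ↦ by simpa using mul_pos ht hu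
  have hsub : {s : ℂ | p.re < s.re} ⊆ {p}ᶜ := fun s hs h ↦ (h ▸ hs : p.re < p.re).false
  have hlim_ray := ((hlim.mono_left (nhdsWithin_mono p hsub)).comp hray).mul_const
    (Complex.exp (k * θ * Complex.I))
  refine ge_of_tendsto ((Complex.continuous_re.tendsto _).comp hlim_ray) ?_
  filter_upwards [hray.eventually hf, self_mem_nhdsWithin] with t ht (ht0 : 0 < t)
  have hu_pow : u ^ k * Complex.exp (k * θ * Complex.I) = 1 := by
    rw [← Complex.exp_nat_mul, ← Complex.exp_add, ← Complex.exp_zero]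
    ring_nf
  have heq : (p + t * u - p) ^ k * f (p + t * u) * Complex.exp (k * θ * Complex.I) =
      ((t ^ k : ℝ) : ℂ) * f (p + t * u) := by
    rw [add_sub_cancel_left, mul_pow, Complex.ofReal_pow]
    linear_combination (t : ℂ) ^ k * f (p + t * u) * hu_pow
  simp only [Function.comp_apply, heq, Complex.re_ofReal_mul]
  positivity

theorem hasNonnegResidueAt_of_eventually_re_nonneg {f : ℂ → ℂ} {p : ℂ} (hf : MeromorphicAt f p)
    (hpos : ∀ᶠ s in 𝓝[{s | p.re < s.re}] p, 0 ≤ (f s).re) : HasNonnegResidueAt f p := by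
  have hmul : MeromorphicAt (fun s ↦ (s - p) * f s) p := by fun_prop
  suffices hord : 0 ≤ meromorphicOrderAt (fun s ↦ (s - p) * f s) p by
    obtain ⟨r, hr⟩ := tendsto_nhds_of_meromorphicOrderAt_nonneg hmul hord
    exact ⟨r, (nonneg_and_eq_zero_of_tendsto_sub_pow_mul one_ne_zero
      (by simpa using hr) hpos).1, hr⟩
  by_contra! hneg
  obtain ⟨n, hn⟩ := WithTop.ne_top_iff_exists.1 hneg.ne_top
  obtain ⟨g, hg, hgp, hfg⟩ := (meromorphicOrderAt_eq_int_iff hmul).1 hn.symm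
  obtain ⟨k, hk⟩ : ∃ k : ℕ, n = -(k + 1) := ⟨(-n - 1).toNat, by
    rw [← hn] at hneg
    have : n < 0 := mod_cast hneg
    omega⟩
  have hlim : Tendsto (fun s ↦ (s - p) ^ (k + 2) * f s) (𝓝[≠] p) (𝓝 (g p)) := by
    refine (hg.continuousAt.tendsto.mono_left nhdsWithin_le_nhds).congr' ?_
    filter_upwards [hfg, self_mem_nhdsWithin] with s hs hsp
    have hsp' : s - p ≠ 0 := sub_ne_zero.2 hsp
    rw [pow_succ, mul_assoc, hs, hk, _root_.zpow_neg, smul_eq_mul, ← mul_assoc]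
    norm_cast
    rw [mul_inv_cancel₀ (pow_ne_zero _ hsp'), one_mul]
  exact hgp ((nonneg_and_eq_zero_of_tendsto_sub_pow_mul (by omega) hlim hpos).2 (by omega))

theorem re_nonneg_of_continuousAt {f : ℂ → ℂ} {p : ℂ} (hf : ContinuousAt f p)
    (hpos : ∀ᶠ s in 𝓝[{s | p.re < s.re}] p, 0 ≤ (f s).re) : 0 ≤ (f p).re := by
  have hp : p ∈ closure {s : ℂ | p.re < s.re} := by
    rw [Complex.closure_setOfPred_lt_re]; exact le_refl p.re
  have := mem_closure_iff_nhdsWithin_neBot.1 hp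
  exact ge_of_tendsto ((Complex.continuous_re.tendsto _).comp
    (hf.tendsto.mono_left nhdsWithin_le_nhds)) hpos

/-- The quadratic form `xᴴ M x` of a complex matrix; scalar functions `s ↦ xᴴ T(s) x` carry
the positivity conditions on a matrix function `T` over to complex analysis. -/
def quadForm {ι : Type*} [Fintype ι] (M : Matrix ι ι ℂ) (x : ι → ℂ) : ℂ :=
  star x ⬝ᵥ M *ᵥ x

section QuadForm

variable {ι : Type*} [Fintype ι]

theorem quadForm_add (M N : Matrix ι ι ℂ) (x : ι → ℂ) :
    quadForm (M + N) x = quadForm M x + quadForm N x := by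
  rw [quadForm, add_mulVec, dotProduct_add, quadForm, quadForm]

theorem quadForm_smul (c : ℂ) (M : Matrix ι ι ℂ) (x : ι → ℂ) :
    quadForm (c • M) x = c * quadForm M x := by
  rw [quadForm, smul_mulVec, dotProduct_smul, smul_eq_mul, quadForm]

theorem quadForm_conjTranspose (M : Matrix ι ι ℂ) (x : ι → ℂ) :
    quadForm Mᴴ x = conj (quadForm M x) := by
  rw [quadForm, star_dotProduct, star_mulVec, conjTranspose_conjTranspose, ← dotProduct_mulVec,
    quadForm, starRingEnd_apply]

theorem quadForm_map_conj (M : Matrix ι ι ℂ) (x : ι → ℂ) :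
    quadForm (M.map conj) x = conj (quadForm M (star x)) := by
  simp [quadForm, dotProduct, mulVec]

theorem continuous_quadForm (x : ι → ℂ) : Continuous fun M : Matrix ι ι ℂ ↦ quadForm M x := by
  unfold quadForm
  fun_prop

theorem quadForm_smul_add (M : Matrix ι ι ℂ) (c : ℂ) (x y : ι → ℂ) :
    quadForm M (c • x + y) = conj c * c * quadForm M x + conj c * (star x ⬝ᵥ M *ᵥ y) +
      c * (star y ⬝ᵥ M *ᵥ x) + quadForm M y := by
  simp only [quadForm, star_add, star_smul, mulVec_add, mulVec_smul, add_dotProduct,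
    dotProduct_add, smul_dotProduct, dotProduct_smul, smul_eq_mul, starRingEnd_apply]
  ring

theorem four_mul_star_dotProduct_mulVec (M : Matrix ι ι ℂ) (x y : ι → ℂ) :
    4 * (star x ⬝ᵥ M *ᵥ y) =
      ∑ k ∈ Finset.range 4, Complex.I ^ k * quadForm M (Complex.I ^ k • x + y) := by
  simp only [Finset.sum_range_succ, Finset.sum_range_zero, quadForm_smul_add, pow_zero,
    pow_one, Complex.I_sq, Complex.I_pow_three, map_one, map_neg, Complex.conj_I]
  linear_combination (2 * (star x ⬝ᵥ M *ᵥ y) - 2 * (star y ⬝ᵥ M *ᵥ x)) * Complex.I_sq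

theorem apply_eq_sum_quadForm [DecidableEq ι] (M : Matrix ι ι ℂ) (i j : ι) :
    M i j = 4⁻¹ * ∑ k ∈ Finset.range 4, Complex.I ^ k *
      quadForm M (Complex.I ^ k • Pi.single i 1 + Pi.single j 1) := by
  rw [← four_mul_star_dotProduct_mulVec, ← Pi.single_star, star_one, single_one_dotProduct,
    mulVec_single_one, col_apply, inv_mul_cancel_left₀ four_ne_zero]

theorem ext_quadForm {M N : Matrix ι ι ℂ} (h : ∀ x, quadForm M x = quadForm N x) : M = N := by
  classical
  ext i j
  simp only [apply_eq_sum_quadForm _ i j, h]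

theorem exists_tendsto_of_tendsto_quadForm {α : Type*} {l : Filter α} [l.NeBot]
    {F : α → Matrix ι ι ℂ} {q : (ι → ℂ) → ℂ}
    (h : ∀ x, Tendsto (fun a ↦ quadForm (F a) x) l (𝓝 (q x))) :
    ∃ K, Tendsto F l (𝓝 K) ∧ ∀ x, quadForm K x = q x := by
  classical
  obtain ⟨K, hK⟩ : ∃ K : Matrix ι ι ℂ, Tendsto F l (𝓝 K) := by
    refine ⟨of fun i j ↦ 4⁻¹ * ∑ k ∈ Finset.range 4, Complex.I ^ k *
      q (Complex.I ^ k • Pi.single i 1 + Pi.single j 1),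
      tendsto_pi_nhds.2 fun i ↦ tendsto_pi_nhds.2 fun j ↦ ?_⟩
    simp only [apply_eq_sum_quadForm (F _) i j]
    exact (tendsto_finsetSum _ fun k _ ↦ (h _).const_mul _).const_mul _
  exact ⟨K, hK, fun x ↦
    tendsto_nhds_unique (((continuous_quadForm x).tendsto K).comp hK) (h x)⟩

theorem posSemidef_iff_quadForm_nonneg {M : Matrix ι ι ℂ} :
    M.PosSemidef ↔ ∀ x, 0 ≤ quadForm M x := by
  refine ⟨fun h x ↦ h.dotProduct_mulVec_nonneg x, fun h ↦
    posSemidef_iff_dotProduct_mulVec.2 ⟨ext_quadForm fun x ↦ ?_, h⟩⟩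
  rw [quadForm_conjTranspose]
  exact (IsSelfAdjoint.of_nonneg (h x)).star_eq

theorem posSemidef_add_conjTranspose_iff {M : Matrix ι ι ℂ} :
    (M + Mᴴ).PosSemidef ↔ ∀ x, 0 ≤ (quadForm M x).re := by
  simp only [posSemidef_iff_quadForm_nonneg, quadForm_add, quadForm_conjTranspose,
    Complex.add_conj, Complex.zero_le_real]
  exact forall_congr' fun x ↦ mul_nonneg_iff_of_pos_left two_pos

theorem posSemidef_I_smul_sub_conjTranspose_iff {T : Matrix ι ι ℂ} {ω : ℝ} (hω : 0 < ω) :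
    (Complex.I • (T - Tᴴ)).PosSemidef ↔ ∀ x, 0 ≤ (quadForm ((Complex.I * ω) • T) x).re := by
  have hT : Complex.I • (T - Tᴴ) = Complex.I • T + (Complex.I • T)ᴴ := by
    simp [sub_eq_add_neg]
  rw [hT, posSemidef_add_conjTranspose_iff]
  refine forall_congr' fun x ↦ ?_
  rw [quadForm_smul, quadForm_smul, mul_comm Complex.I (ω : ℂ), mul_assoc, Complex.re_ofReal_mul,
    mul_nonneg_iff_of_pos_left hω]

theorem exists_tendsto_posSemidef_iff {T : ℂ → Matrix ι ι ℂ} {ω : ℝ} (hω : 0 < ω) :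
    (∃ K, Tendsto (fun s ↦ (s - Complex.I * ω) • Complex.I • T s) (𝓝[≠] (Complex.I * ω)) (𝓝 K) ∧
        K.PosSemidef) ↔
      ∀ x, HasNonnegResidueAt (fun s ↦ quadForm (s • T s) x) (Complex.I * ω) := by
  set p : ℂ := Complex.I * ω with hp
  have hp0 : p ≠ 0 := by simp [hp, hω.ne']
  have hω' : (0 : ℂ) < ω := mod_cast hω
  constructor
  · rintro ⟨K, hK, hK_psd⟩ x
    refine ⟨ω * quadForm K x,
      mul_nonneg hω'.le (posSemidef_iff_quadForm_nonneg.1 hK_psd x), ?_⟩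
    have hfactor : Tendsto (fun s : ℂ ↦ -Complex.I * s) (𝓝[≠] p) (𝓝 (ω : ℂ)) := by
      have : Tendsto (fun s : ℂ ↦ -Complex.I * s) (𝓝 p) (𝓝 (-Complex.I * p)) :=
        (continuous_const_mul _).tendsto p
      rw [hp, ← mul_assoc, neg_mul, Complex.I_mul_I, neg_neg, one_mul] at this
      exact this.mono_left nhdsWithin_le_nhds
    refine (hfactor.mul (((continuous_quadForm x).tendsto K).comp hK)).congr fun s ↦ ?_
    simp only [Function.comp_apply, quadForm_smul]
    linear_combination (-(s - p) * s * quadForm (T s) x) * Complex.I_sq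
  · intro h
    choose r hr hlim using h
    have hfactor : Tendsto (fun s : ℂ ↦ Complex.I * s⁻¹) (𝓝[≠] p) (𝓝 (ω : ℂ)⁻¹) := by
      have : Tendsto (fun s : ℂ ↦ Complex.I * s⁻¹) (𝓝 p) (𝓝 (Complex.I * p⁻¹)) :=
        (tendsto_inv₀ hp0).const_mul _
      rw [hp, mul_inv, mul_inv_cancel_left₀ Complex.I_ne_zero] at this
      exact this.mono_left nhdsWithin_le_nhds
    have hquad : ∀ x, Tendsto (fun s ↦ quadForm ((s - p) • Complex.I • T s) x) (𝓝[≠] p)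
        (𝓝 ((ω : ℂ)⁻¹ * r x)) := by
      refine fun x ↦ (hfactor.mul (hlim x)).congr' ?_
      filter_upwards [nhdsWithin_le_nhds (isOpen_ne.mem_nhds hp0)] with s hs
      simp only [quadForm_smul]
      field_simp
    obtain ⟨K, hK, hKr⟩ := exists_tendsto_of_tendsto_quadForm hquad
    refine ⟨K, hK, posSemidef_iff_quadForm_nonneg.2 fun x ↦ ?_⟩
    rw [hKr]
    exact mul_nonneg (inv_nonneg.2 hω'.le) (hr x)

end QuadForm

theorem tendsto_smul_resolvent_cobounded {𝕜 R : Type*} [NontriviallyNormedField 𝕜] [NormedRing R]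
    [NormedAlgebra 𝕜 R] [CompleteSpace R] (a : R) :
    Tendsto (fun z : 𝕜 ↦ z • resolvent a z) (cobounded 𝕜) (𝓝 1) := by
  have hlim : Tendsto (fun z : 𝕜 ↦ 1 + a * resolvent a z) (cobounded 𝕜) (𝓝 1) := by
    simpa using ((spectrum.resolvent_tendsto_cobounded a).const_mul a).const_add 1
  refine hlim.congr' ?_
  filter_upwards [(spectrum.isBounded (𝕜 := 𝕜) a)] with z hz
  have hunit : IsUnit (algebraMap 𝕜 R z - a) := by simpa using spectrum.notMem_iff.1 hz
  have hinv : (algebraMap 𝕜 R z - a) * resolvent a z = 1 := Ring.mul_inverse_cancel _ hunit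
  rw [Algebra.smul_def, ← hinv, ← add_mul, sub_add_cancel]

section Field

variable {ι K L : Type*} [Fintype ι] [DecidableEq ι] [Field K] [Field L]

theorem inv_map_ringHom (f : K →+* L) (A : Matrix ι ι K) : (A.map f)⁻¹ = A⁻¹.map f := by
  have hadj : (A.map f).adjugate = A.adjugate.map f := (f.map_adjugate A).symm
  have hdet : (A.map f).det = f A.det := (f.map_det A).symm
  rw [inv_def, inv_def, hadj, hdet, Ring.inverse_eq_inv', Ring.inverse_eq_inv', ← map_inv₀]
  ext i j
  simp

theorem inv_smul_one_sub_eq (A : Matrix ι ι K) (s : K) :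
    (s • 1 - A)⁻¹ = (A.charpoly.eval s)⁻¹ • A.charmatrix.adjugate.map (Polynomial.eval s) := by
  have hchar : A.charmatrix.map (Polynomial.eval s) = s • 1 - A := by
    ext i j
    by_cases h : i = j <;> simp [h]
  have hadj : A.charmatrix.adjugate.map (Polynomial.eval s) = (s • 1 - A).adjugate := by
    rw [← hchar]
    exact (Polynomial.evalRingHom s).map_adjugate A.charmatrix
  rw [inv_def, Ring.inverse_eq_inv', eval_charpoly, hadj, smul_one_eq_diagonal, scalar_apply]

theorem exists_dotProduct_inv_mulVec_eq_div (A : Matrix ι ι K) (u v : ι → K) :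
    ∃ N : Polynomial K, ∀ s, u ⬝ᵥ (s • 1 - A)⁻¹ *ᵥ v = N.eval s / A.charpoly.eval s := by
  refine ⟨(Polynomial.C ∘ u) ⬝ᵥ A.charmatrix.adjugate *ᵥ (Polynomial.C ∘ v), fun s ↦ ?_⟩
  have heval : ∀ w : ι → K, Polynomial.evalRingHom s ∘ Polynomial.C ∘ w = w := fun w ↦ by
    ext; simp
  rw [inv_smul_one_sub_eq, smul_mulVec, dotProduct_smul, smul_eq_mul, inv_mul_eq_div,
    ← Polynomial.coe_evalRingHom, RingHom.map_dotProduct, heval]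
  congr 2
  ext i
  rw [Function.comp_apply, RingHom.map_mulVec, heval]

end Field

theorem eval_charpoly_map_ofReal {k : Type*} [Fintype k] [DecidableEq k] (A : Matrix k k ℝ)
    (s : ℂ) : (A.map Complex.ofReal).charpoly.eval s = A.charpoly.aeval s := by
  rw [← Polynomial.eval_map_algebraMap]
  exact congrArg (Polynomial.eval s) (charpoly_map A (algebraMap ℝ ℂ))

theorem mem_eigs_iff {k : Type*} [Fintype k] [DecidableEq k] {A : Matrix k k ℝ} {s : ℂ} :
    s ∈ eigs A ↔ A.charpoly.aeval s = 0 := by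
  rw [eigs, mem_spectrum_iff_isRoot_charpoly, Polynomial.IsRoot,
    eval_charpoly_map_ofReal]

theorem conj_mem_eigs_iff {k : Type*} [Fintype k] [DecidableEq k] {A : Matrix k k ℝ} {s : ℂ} :
    conj s ∈ eigs A ↔ s ∈ eigs A := by
  rw [mem_eigs_iff, mem_eigs_iff, Polynomial.aeval_conj, map_eq_zero]

section TransferFunction

variable {n m : ℕ} {A : Matrix (Fin n) (Fin n) ℝ} {B : Matrix (Fin n) (Fin m) ℝ}
  {C : Matrix (Fin m) (Fin n) ℝ} {D : Matrix (Fin m) (Fin m) ℝ}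

theorem tf_conj (s : ℂ) : tf A B C D (conj s) = (tf A B C D s).map conj := by
  have hreal : ∀ {a b : ℕ} (X : Matrix (Fin a) (Fin b) ℝ),
      (X.map Complex.ofReal).map conj = X.map Complex.ofReal := fun X ↦ by ext; simp
  have hpencil : conj s • (1 : Matrix (Fin n) (Fin n) ℂ) - A.map Complex.ofReal =
      (s • (1 : Matrix (Fin n) (Fin n) ℂ) - A.map Complex.ofReal).map conj := by
    ext i j
    by_cases h : i = j <;> simp [h]
  rw [tf, tf, hpencil, inv_map_ringHom, Matrix.map_add _ (map_add _), Matrix.map_mul,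
    Matrix.map_mul, hreal, hreal, hreal]

theorem quadForm_smul_tf_conj (s : ℂ) (x : Fin m → ℂ) :
    quadForm (conj s • tf A B C D (conj s)) x = conj (quadForm (s • tf A B C D s) (star x)) := by
  rw [tf_conj, quadForm_smul, quadForm_smul, quadForm_map_conj, map_mul]

variable (A B C) in
theorem exists_quadForm_smul_tf_eq_div (x : Fin m → ℂ) :
    ∃ N : Polynomial ℂ, ∀ s, quadForm (s • tf A B C 0 s) x = N.eval s / A.charpoly.aeval s := by
  obtain ⟨N, hN⟩ := exists_dotProduct_inv_mulVec_eq_div (A.map Complex.ofReal)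
    (star x ᵥ* C.map Complex.ofReal) (B.map Complex.ofReal *ᵥ x)
  refine ⟨Polynomial.X * N, fun s ↦ ?_⟩
  rw [quadForm_smul, quadForm, tf, Matrix.map_zero _ Complex.ofReal_zero, add_zero,
    ← mulVec_mulVec, ← mulVec_mulVec, dotProduct_mulVec, hN, eval_charpoly_map_ofReal,
    Polynomial.eval_mul, Polynomial.eval_X, mul_div_assoc]

theorem differentiableAt_quadForm_smul_tf {s : ℂ} (hs : s ∉ eigs A) (x : Fin m → ℂ) :
    DifferentiableAt ℂ (fun s ↦ quadForm (s • tf A B C 0 s) x) s := by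
  obtain ⟨N, hN⟩ := exists_quadForm_smul_tf_eq_div A B C x
  simp only [hN]
  exact N.differentiableAt.fun_div A.charpoly.differentiableAt_aeval (mt mem_eigs_iff.2 hs)

theorem meromorphicAt_quadForm_smul_tf (p : ℂ) (x : Fin m → ℂ) :
    MeromorphicAt (fun s ↦ quadForm (s • tf A B C 0 s) x) p := by
  obtain ⟨N, hN⟩ := exists_quadForm_smul_tf_eq_div A B C x
  simp only [hN]
  exact (N.differentiable.analyticAt p).meromorphicAt.fun_div
    (A.charpoly.differentiable_aeval.analyticAt p).meromorphicAt

open scoped Matrix.Norms.Operator in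
variable (A B C) in
theorem tendsto_smul_tf_cobounded :
    Tendsto (fun s ↦ s • tf A B C 0 s) (cobounded ℂ) (𝓝 ((C * B).map Complex.ofReal)) := by
  have hcont : Continuous fun Y : Matrix (Fin n) (Fin n) ℂ ↦
      C.map Complex.ofReal * Y * B.map Complex.ofReal := by fun_prop
  have hCB : C.map Complex.ofReal * (1 : Matrix (Fin n) (Fin n) ℂ) * B.map Complex.ofReal =
      (C * B).map Complex.ofReal := by
    rw [Matrix.mul_one]
    exact (Matrix.map_mul (f := Complex.ofRealHom)).symm
  rw [← hCB]
  refine ((hcont.tendsto 1).comp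
    (tendsto_smul_resolvent_cobounded (A.map Complex.ofReal))).congr fun s ↦ ?_
  rw [tf, Matrix.map_zero _ Complex.ofReal_zero, add_zero, Function.comp_apply, resolvent,
    Algebra.algebraMap_eq_smul_one, ← nonsing_inv_eq_ringInverse, Matrix.mul_smul,
    Matrix.smul_mul]

theorem isNI_iff :
    IsNI A B C D ↔ (∀ μ ∈ eigs A, μ ≠ 0 ∧ μ.re ≤ 0) ∧
      (∀ ω : ℝ, 0 < ω → Complex.I * ω ∉ eigs A → ∀ x,
        0 ≤ (quadForm ((Complex.I * ω) • tf A B C D (Complex.I * ω)) x).re) ∧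
      ∀ ω : ℝ, 0 < ω → Complex.I * ω ∈ eigs A → ∀ x,
        HasNonnegResidueAt (fun s ↦ quadForm (s • tf A B C D s) x) (Complex.I * ω) :=
  and_congr_right' <| and_congr
    (forall₃_congr fun _ hω _ ↦ posSemidef_I_smul_sub_conjTranspose_iff hω)
    (forall₃_congr fun _ hω _ ↦ exists_tendsto_posSemidef_iff hω)

theorem exists_pos_eq_I_mul_or_conj_eq {s : ℂ} (hs : s.re = 0) (hs0 : s ≠ 0) :
    ∃ ω : ℝ, 0 < ω ∧ (s = Complex.I * ω ∨ conj s = Complex.I * ω) := by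
  have him : s.im ≠ 0 := fun h ↦ hs0 (Complex.ext hs h)
  refine ⟨|s.im|, abs_pos.2 him, ?_⟩
  rcases abs_choice s.im with h | h
  · exact Or.inl (Complex.ext (by simp [hs]) (by simp [h]))
  · exact Or.inr (Complex.ext (by simp [hs]) (by simp [h]))

theorem IsNI.re_quadForm_nonneg (h : IsNI A B C D) {s : ℂ} (hs : s.re = 0) (hsA : s ∉ eigs A)
    (x : Fin m → ℂ) : 0 ≤ (quadForm (s • tf A B C D s) x).re := by
  obtain ⟨-, hline, -⟩ := isNI_iff.1 h
  obtain rfl | hs0 := eq_or_ne s 0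
  · rw [quadForm_smul, zero_mul, Complex.zero_re]
  obtain ⟨ω, hω, rfl | hconj⟩ := exists_pos_eq_I_mul_or_conj_eq hs hs0
  · exact hline ω hω hsA x
  · rw [← conj_mem_eigs_iff, hconj] at hsA
    have := hline ω hω hsA (star x)
    rwa [← hconj, quadForm_smul_tf_conj, star_star, Complex.conj_re] at this

theorem IsNI.hasNonnegResidueAt (h : IsNI A B C D) {p : ℂ} (hp : p.re = 0) (hpA : p ∈ eigs A)
    (x : Fin m → ℂ) : HasNonnegResidueAt (fun s ↦ quadForm (s • tf A B C D s) x) p := by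
  obtain ⟨heigs, -, hres⟩ := isNI_iff.1 h
  obtain ⟨ω, hω, rfl | hconj⟩ := exists_pos_eq_I_mul_or_conj_eq hp (heigs p hpA).1
  · exact hres ω hω hpA x
  · rw [← conj_mem_eigs_iff, hconj] at hpA
    have := hres ω hω hpA (star x)
    rw [← hconj] at this
    simpa [quadForm_smul_tf_conj] using this.conj

theorem IsNI.re_quadForm_nonneg_of_re_pos (h : IsNI A B C 0) {s : ℂ} (hs : 0 < s.re)
    (x : Fin m → ℂ) : 0 ≤ (quadForm (s • tf A B C 0 s) x).re := by
  refine re_nonneg_of_hasNonnegResidueAt (f := fun s ↦ quadForm (s • tf A B C 0 s) x)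
    (fun z hz ↦ ?_) (fun p _ ↦ meromorphicAt_quadForm_smul_tf p x) (fun p hp ↦ ?_) ?_
    (((continuous_quadForm x).tendsto _).comp (tendsto_smul_tf_cobounded A B C)) hs
  · have hzA : z ∉ eigs A := fun hzA ↦ (h.1 z hzA).2.not_gt hz
    exact (differentiableAt_quadForm_smul_tf hzA x).differentiableWithinAt
  · by_cases hpA : p ∈ eigs A
    · exact h.hasNonnegResidueAt hp hpA x
    · exact hasNonnegResidueAt_of_continuousAt
        (differentiableAt_quadForm_smul_tf hpA x).continuousAt
  · filter_upwards [(finite_spectrum (A.map Complex.ofReal)).eventually_cofinite_notMem]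
      with z hzA hz
    exact h.re_quadForm_nonneg hz hzA x

theorem isNI_of_re_quadForm_nonneg (heigs : ∀ μ ∈ eigs A, μ ≠ 0 ∧ μ.re ≤ 0)
    (hpos : ∀ (x : Fin m → ℂ) (s : ℂ), 0 < s.re → 0 ≤ (quadForm (s • tf A B C 0 s) x).re) :
    IsNI A B C 0 := by
  have hnear : ∀ (x : Fin m → ℂ) (ω : ℝ),
      ∀ᶠ s in 𝓝[{s | (Complex.I * ω).re < s.re}] (Complex.I * ω),
        0 ≤ (quadForm (s • tf A B C 0 s) x).re := fun x ω ↦ by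
    filter_upwards [self_mem_nhdsWithin] with s (hs : (Complex.I * ω).re < s.re)
    exact hpos x s (by simpa using hs)
  exact isNI_iff.2 ⟨heigs,
    fun ω _ hωA x ↦ re_nonneg_of_continuousAt
      (differentiableAt_quadForm_smul_tf hωA x).continuousAt (hnear x ω),
    fun ω _ _ x ↦ hasNonnegResidueAt_of_eventually_re_nonneg
      (meromorphicAt_quadForm_smul_tf _ x) (hnear x ω)⟩

end TransferFunction

theorem ni_iff_sR_positive_real_general {n m : ℕ} (A : Matrix (Fin n) (Fin n) ℝ)
    (B : Matrix (Fin n) (Fin m) ℝ) (C : Matrix (Fin m) (Fin n) ℝ) :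
    IsNI A B C 0 ↔
      ((0 : ℂ) ∉ eigs A ∧
        ((∀ μ ∈ eigs A, μ.re ≤ 0) ∧
          ∀ s : ℂ, 0 < s.re →
            (s • tf A B C 0 s + (s • tf A B C 0 s)ᴴ).PosSemidef)) := by
  simp only [posSemidef_add_conjTranspose_iff]
  constructor
  · intro h
    exact ⟨fun h0 ↦ (h.1 0 h0).1 rfl, fun μ hμ ↦ (h.1 μ hμ).2,
      fun s hs x ↦ h.re_quadForm_nonneg_of_re_pos hs x⟩
  · rintro ⟨h0, hre, hpos⟩
    exact isNI_of_re_quadForm_nonneg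
      (fun μ hμ ↦ ⟨ne_of_mem_of_not_mem hμ h0, hre μ hμ⟩) fun x s hs ↦ hpos s hs x

/-- Lemma 2: a strictly proper system is negative imaginary iff `A` has no eigenvalue at the
origin and `F(s) = s R(s)` is positive real. -/
theorem ni_iff_sR_positive_real {n m : ℕ} (A : Matrix (Fin n) (Fin n) ℝ)
    (B : Matrix (Fin n) (Fin m) ℝ) (C : Matrix (Fin m) (Fin n) ℝ)
    (hmin : IsMinimal A B C) :
    IsNI A B C 0 ↔
      ((0 : ℂ) ∉ eigs A ∧
        ((∀ μ ∈ eigs A, μ.re ≤ 0) ∧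
          ∀ s : ℂ, 0 < s.re →
            (s • tf A B C 0 s + (s • tf A B C 0 s)ᴴ).PosSemidef)) :=
  ni_iff_sR_positive_real_general A B C
end

section
/- Let (A,B,C,D) be a minimal state-space realization of an m×m real-rational proper transfer function R(s) = C(sI − A)⁻¹B + D. Then the system is negative imaginary if and only if: (1) det(A) ≠ 0 and D = Dᵀ; and (2) there exists a real symmetric matrix Y ≻ 0, Y ∈ ℝ^{n×n}, such that AY + YAᵀ ⪯ 0 and B + AYCᵀ = 0. -/
open Matrix Filter Topology ComplexOrder

/-!
If `A` is invertible, write `B = -A * B'`. Then `R(s) = (C * B' + D) - s G(s)` with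
`G(s) = C (sI - A)⁻¹ B'`, and `C * B' + D = R(0)`. The limits of `j (R - Rᴴ) ⪰ 0` at `ω → ∞` and
`ω → 0` force `D` and `R(0)` to be symmetric. Once `R(0)` is, `j (R - Rᴴ) = ω (G + Gᴴ)` at `s = jω`,
so `R` is negative imaginary exactly when `G` is positive real on the imaginary axis.

For controllable `(A, B')`, positive realness of `G` yields a Hermitian solution `P` of the
Kalman–Yakubovich–Popov inequality `P A + Aᴴ P ⪯ 0`, `P B' = Cᴴ`: were there none, separating a
subspace from the positive semidefinite cone would produce a certificate of infeasibility, which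
splits into rank-one pieces each violating the frequency domain inequality at some `jω`. Positivity
of `P` follows by an induction on the dimension that reduces it to eigenvectors of `A`, where
observability and the residue condition apply. Taking real parts makes `P` real, and `Y = P⁻¹`.
-/

open Complex (I)

section PosSemidef

variable {𝕜 k l : Type*} [RCLike 𝕜]

theorem isClosed_setOf_posSemidef [Finite k] : IsClosed {M : Matrix k k 𝕜 | M.PosSemidef} := by
  have := Fintype.ofFinite k
  simp only [posSemidef_iff_dotProduct_mulVec, IsHermitian, Set.ofPred_and, Set.ofPred_forall]
  exact (isClosed_eq (by fun_prop) continuous_id).inter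
    (isClosed_iInter fun x => isClosed_le continuous_const (by fun_prop))

theorem posSemidef_of_fromBlocks_posSemidef {A : Matrix k k 𝕜} {B : Matrix k l 𝕜}
    {C : Matrix l k 𝕜} {D : Matrix l l 𝕜} (h : (fromBlocks A B C D).PosSemidef) : A.PosSemidef :=
  h.submatrix Sum.inl

variable [Fintype k]

theorem exists_sqrt_pinv {W : Matrix k k 𝕜} (hW : W.PosSemidef) :
    ∃ R S : Matrix k k 𝕜, R.IsHermitian ∧ S.IsHermitian ∧ R * R = W ∧ R * S = S * R ∧
      R * S * R = R := by
  classical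
  have hcont (f : ℝ → ℝ) : ContinuousOn f (spectrum ℝ W) :=
    W.finite_real_spectrum.continuousOn f
  have hsa : IsSelfAdjoint W := hW.isHermitian
  have hmul (f g : ℝ → ℝ) : cfc f W * cfc g W = cfc (fun x => f x * g x) W :=
    (cfc_mul f g W (hcont f) (hcont g)).symm
  refine ⟨cfc (fun x => √x) W, cfc (fun x => (√x)⁻¹) W, cfc_predicate _ W, cfc_predicate _ W, ?_,
    cfc_commute_cfc _ _ W, ?_⟩
  · rw [hmul]
    conv_rhs => rw [← cfc_id ℝ W]
    refine cfc_congr fun x hx => Real.mul_self_sqrt ?_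
    obtain ⟨i, rfl⟩ := hW.isHermitian.spectrum_real_eq_range_eigenvalues ▸ hx
    exact hW.eigenvalues_nonneg i
  · simp only [hmul, mul_inv_mul_cancel]

theorem exists_eq_mul_diagonal_mul [DecidableEq k] {H : Matrix k k 𝕜} (hH : H.IsHermitian) :
    ∃ (Q : Matrix k k 𝕜) (t : k → ℝ), Q * Qᴴ = 1 ∧ H * Q = Q * diagonal (fun i => (t i : 𝕜)) := by
  refine ⟨hH.eigenvectorUnitary, hH.eigenvalues, Unitary.coe_mul_star_self _, ?_⟩
  have hspec := hH.spectral_theorem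
  rw [Unitary.conjStarAlgAut_apply] at hspec
  calc H * hH.eigenvectorUnitary = _ * hH.eigenvectorUnitary := congrArg (· * _) hspec
    _ = _ := by
      rw [mul_assoc, Unitary.coe_star_mul_self, mul_one]
      rfl

/- A PSD solution of the undamped Lyapunov equation is a sum of rank-one solutions, each carried by
an imaginary-axis eigenvector: writing `W = R²`, the equation makes `R⁺ a R` skew-Hermitian. -/
theorem exists_eq_mul_conjTranspose_of_lyapunov_eq_zero [DecidableEq k] {a W : Matrix k k ℂ}
    (hW : W.PosSemidef) (h : a * W + W * aᴴ = 0) :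
    ∃ (X : Matrix k k ℂ) (t : k → ℝ), W = X * Xᴴ ∧
      a * X = X * diagonal (fun i => I * (t i : ℂ)) := by
  obtain ⟨R, S, hR, hS, hRR, hRS, hRSR⟩ := exists_sqrt_pinv hW
  have hskew : W * aᴴ = -(a * W) := eq_neg_of_add_eq_zero_right h
  have hWS : W * S = R := by rw [← hRR, mul_assoc, hRS, ← mul_assoc, hRSR]
  have hRSW : R * S * W = W := by rw [← hRR, ← mul_assoc, hRSR]
  have hH : ((-I) • (S * (a * W) * S)).IsHermitian := by
    rw [IsHermitian, conjTranspose_smul, conjTranspose_mul, conjTranspose_mul, conjTranspose_mul,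
      hS.eq, hW.isHermitian.eq, hskew]
    simp [mul_assoc]
  have haR : a * R = I • (R * ((-I) • (S * (a * W) * S))) := by
    have hRSaW : R * S * (a * W) = a * W := by
      rw [← neg_eq_iff_eq_neg.mpr hskew, mul_neg, ← mul_assoc, hRSW]
    rw [mul_smul_comm, smul_smul, ← mul_assoc, ← mul_assoc, hRSaW, mul_assoc, hWS]
    simp
  obtain ⟨Q, t, hQ, hHQ⟩ := exists_eq_mul_diagonal_mul hH
  refine ⟨R * Q, t, ?_, ?_⟩
  · rw [conjTranspose_mul, hR.eq, mul_assoc, ← mul_assoc Q, hQ, one_mul, hRR]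
  · rw [← mul_assoc, haR, smul_mul_assoc, mul_assoc, hHQ, ← mul_assoc, ← mul_smul_comm,
      ← diagonal_smul]
    rfl

theorem mul_eq_zero_of_conjTranspose_mul_mul_eq_zero {N : Matrix k k 𝕜} (hN : N.PosSemidef)
    {Z : Matrix k l 𝕜} (h : Zᴴ * N * Z = 0) : N * Z = 0 := by
  have hcol (j : l) : N *ᵥ Z.col j = 0 := by
    rw [← hN.dotProduct_mulVec_zero_iff]
    rw [Matrix.mul_assoc] at h
    exact congrFun₂ h j j
  ext i j
  exact congrFun (hcol j) i

theorem mul_eq_zero_of_fromBlocks_posSemidef [Finite l] {A : Matrix k k 𝕜} {B : Matrix k l 𝕜}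
    {C : Matrix l k 𝕜} {D : Matrix l l 𝕜} (h : (fromBlocks A B C D).PosSemidef)
    {o : Type*} {Z : Matrix k o 𝕜} (hZ : A * Z = 0) : C * Z = 0 := by
  have := Fintype.ofFinite l
  have := mul_eq_zero_of_conjTranspose_mul_mul_eq_zero h (Z := fromRows Z 0) (by
    rw [Matrix.mul_assoc, fromBlocks_mul_fromRows, conjTranspose_fromRows_eq_fromCols_conjTranspose,
      fromCols_mul_fromRows]
    simp [hZ])
  rw [fromBlocks_mul_fromRows, ← fromRows_zero] at this
  simpa using (fromRows_inj this).2

omit [Fintype k] in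
theorem eq_zero_of_fromBlocks_zero_posSemidef [Finite k] [Finite l] {A : Matrix k k 𝕜}
    {B : Matrix k l 𝕜} {C : Matrix l k 𝕜} (h : (fromBlocks A B C 0).PosSemidef) : B = 0 := by
  classical
  have := Fintype.ofFinite l
  rw [← Matrix.mul_one B]
  exact mul_eq_zero_of_fromBlocks_posSemidef
    (by simpa using h.submatrix (Equiv.sumComm l k)) (Matrix.zero_mul _)

end PosSemidef

section ConeSeparation

theorem exists_mul_norm_le_norm_map {E F : Type*} [NormedAddCommGroup E] [NormedSpace ℝ E]
    [FiniteDimensional ℝ E] [NormedAddCommGroup F] [NormedSpace ℝ F] {C : PointedCone ℝ E}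
    (hC : IsClosed (C : Set E)) {f : E →ₗ[ℝ] F} (hf : ∀ x ∈ C, f x = 0 → x = 0) :
    ∃ r > 0, ∀ x ∈ C, r * ‖x‖ ≤ ‖f x‖ := by
  have hfc : Continuous f := f.continuous_of_finiteDimensional
  have hprop : ProperSpace E := FiniteDimensional.proper ℝ E
  have hnorm {x : E} (hx : x ∈ C) (hx0 : x ≠ 0) :
      ‖x‖⁻¹ • x ∈ (C : Set E) ∩ Metric.sphere 0 1 :=
    ⟨C.smul_mem (inv_nonneg.2 (norm_nonneg x)) hx, by simp [norm_smul, hx0]⟩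
  obtain hempty | hne := ((C : Set E) ∩ Metric.sphere 0 1).eq_empty_or_nonempty
  · refine ⟨1, one_pos, fun x hx => ?_⟩
    obtain rfl | hx0 := eq_or_ne x 0
    · simp
    · exact absurd (hnorm hx hx0) (hempty ▸ Set.notMem_empty _)
  · obtain ⟨x₀, ⟨hx₀C, hx₀⟩, hmin⟩ := ((isCompact_sphere 0 1).inter_left hC).exists_isMinOn hne
      hfc.norm.continuousOn
    refine ⟨‖f x₀‖, norm_pos_iff.2 fun h => ?_, fun x hx => ?_⟩
    · simp [hf x₀ hx₀C h] at hx₀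
    · obtain rfl | hx0 := eq_or_ne x 0
      · simp
      · have hle : ‖f x₀‖ ≤ ‖f (‖x‖⁻¹ • x)‖ := hmin (hnorm hx hx0)
        rwa [map_smul, norm_smul, norm_inv, norm_norm, inv_mul_eq_div,
          le_div_iff₀ (norm_pos_iff.2 hx0)] at hle

theorem isClosed_pointedCone_map {E F : Type*} [NormedAddCommGroup E] [NormedSpace ℝ E]
    [FiniteDimensional ℝ E] [NormedAddCommGroup F] [NormedSpace ℝ F] {C : PointedCone ℝ E}
    (hC : IsClosed (C : Set E)) {f : E →ₗ[ℝ] F} (hf : ∀ x ∈ C, f x = 0 → x = 0) :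
    IsClosed (C.map f : Set F) := by
  obtain ⟨r, hr, hle⟩ := exists_mul_norm_le_norm_map hC hf
  have hprop : ProperSpace E := FiniteDimensional.proper ℝ E
  have hfc : Continuous (fun x : (C : Set E) => f x) :=
    f.continuous_of_finiteDimensional.comp continuous_subtype_val
  have hnorm : Tendsto (fun x : (C : Set E) => r * ‖(x : E)‖) (cocompact _) atTop :=
    ((tendsto_norm_cocompact_atTop (E := E)).comp
      hC.isClosedEmbedding_subtypeVal.tendsto_cocompact).const_mul_atTop hr
  have htend : Tendsto (fun x : (C : Set E) => f x) (cocompact _) (cocompact F) :=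
    (tendsto_norm_atTop_iff_cobounded.1
      (tendsto_atTop_mono (fun x : (C : Set E) => hle x x.2) hnorm)).mono_right
      Metric.cobounded_le_cocompact
  convert (isProperMap_iff_tendsto_cocompact.2 ⟨hfc, htend⟩).isClosed_range
  ext y
  simp

end ConeSeparation

section LMI
variable {k : Type*} [Fintype k]

theorem exists_trace_mul_eq {R : Type*} [CommSemiring R] (φ : Matrix k k R →ₗ[R] R) :
    ∃ W : Matrix k k R, ∀ X, φ X = (W * X).trace := by
  classical
  refine ⟨of fun i j => φ (single j i 1), fun X => ?_⟩
  conv_lhs => rw [matrix_eq_sum_single X]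
  simp only [map_sum, trace, diag, mul_apply, of_apply]
  rw [Finset.sum_comm]
  refine Finset.sum_congr rfl fun i _ => Finset.sum_congr rfl fun j _ => ?_
  rw [← mul_one (X j i), ← smul_eq_mul, ← smul_single, map_smul, smul_eq_mul, smul_eq_mul, mul_one,
    mul_comm]

theorem re_trace_conjTranspose_mul {W X : Matrix k k ℂ} (hX : X.IsHermitian) :
    (Wᴴ * X).trace.re = (W * X).trace.re := by
  rw [← hX.eq, ← conjTranspose_mul, trace_conjTranspose, hX.eq, trace_mul_comm X]
  rfl

theorem exists_isHermitian_re_trace_mul_eq (φ : Matrix k k ℂ →ₗ[ℝ] ℝ) :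
    ∃ V : Matrix k k ℂ, V.IsHermitian ∧ ∀ X : Matrix k k ℂ, X.IsHermitian →
      φ X = (V * X).trace.re := by
  obtain ⟨W, hW⟩ := exists_trace_mul_eq (Module.Dual.extendRCLike (𝕜 := ℂ) φ)
  have hφ (X : Matrix k k ℂ) : φ X = (W * X).trace.re := by
    rw [← hW]
    exact (Module.Dual.re_extendRCLike_apply (𝕜 := ℂ) φ X).symm
  refine ⟨(2⁻¹ : ℝ) • (W + Wᴴ), (isHermitian_add_transpose_self W).smul (.all _),
    fun X hX => ?_⟩
  rw [smul_mul, trace_smul, Complex.smul_re, add_mul, trace_add, Complex.add_re,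
    re_trace_conjTranspose_mul hX, ← hφ, smul_eq_mul]
  ring

theorem posSemidef_of_re_trace_mul_nonneg {V : Matrix k k ℂ} (hV : V.IsHermitian)
    (h : ∀ X : Matrix k k ℂ, X.PosSemidef → 0 ≤ (V * X).trace.re) : V.PosSemidef := by
  refine PosSemidef.of_dotProduct_mulVec_nonneg hV fun v => ?_
  have hv := h _ (posSemidef_vecMulVec_self_star v)
  rw [mul_vecMulVec, trace_vecMulVec, dotProduct_comm] at hv
  exact Complex.le_def.2 ⟨hv, (hV.im_star_dotProduct_mulVec_self v).symm⟩

attribute [local instance] Matrix.normedAddCommGroup Matrix.normedSpace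

open scoped MatrixOrder in
/- The theorem of alternatives for linear matrix inequalities: separate `T` from the cone of all
`M + X` with `M ∈ S`, `X ⪰ 0`, which is closed because `S` contains no semidefinite matrix. -/
theorem exists_mem_sub_posSemidef {S : Submodule ℝ (Matrix k k ℂ)} {T : Matrix k k ℂ}
    (hS : ∀ M ∈ S, M.IsHermitian) (hS0 : ∀ M ∈ S, M.PosSemidef → M = 0) (hT : T.IsHermitian)
    (hdual : ∀ V : Matrix k k ℂ, V.PosSemidef → (∀ M ∈ S, (V * M).trace.re = 0) →
      0 ≤ (V * T).trace.re) :
    ∃ M ∈ S, (T - M).PosSemidef := by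
  let f : S × Matrix k k ℂ →ₗ[ℝ] Matrix k k ℂ := S.subtype.coprod LinearMap.id
  let C : PointedCone ℝ (S × Matrix k k ℂ) := Submodule.prod ⊤ (PointedCone.positive ℝ _)
  have hCmem (x : S × Matrix k k ℂ) : x ∈ C ↔ x.2.PosSemidef := by
    simp [C, Submodule.mem_prod, Matrix.nonneg_iff_posSemidef]
  have hC : IsClosed (C : Set (S × Matrix k k ℂ)) := by
    convert isClosed_setOf_posSemidef.preimage (continuous_snd (X := S) (Y := Matrix k k ℂ))
    ext x
    exact hCmem x
  have hker : ∀ x ∈ C, f x = 0 → x = 0 := by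
    rintro ⟨M, X⟩ hx h
    have hX : X = ↑(-M) := eq_neg_of_add_eq_zero_right h
    have hX0 : X = 0 := hS0 X (hX ▸ (-M).2) ((hCmem _).1 hx)
    have hM : M = 0 := by simpa [hX0] using hX
    rw [hM, hX0, Prod.mk_zero_zero]
  by_contra! hno
  obtain ⟨φ, hφ, hφT⟩ := ProperCone.hyperplane_separation_point
    (x₀ := T) ⟨C.map f, isClosed_pointedCone_map hC hker⟩ (by
      rintro ⟨⟨M, X⟩, hx, rfl⟩
      exact hno M M.2 (by simpa [f] using (hCmem _).1 hx))
  have hφ' (M : S) (X : Matrix k k ℂ) (hX : X.PosSemidef) : 0 ≤ φ (M + X) :=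
    hφ _ ⟨(M, X), (hCmem _).2 hX, rfl⟩
  obtain ⟨V, hV, hVφ⟩ := exists_isHermitian_re_trace_mul_eq (φ : Matrix k k ℂ →ₗ[ℝ] ℝ)
  simp only [ContinuousLinearMap.coe_coe] at hVφ
  have hVpsd : V.PosSemidef := posSemidef_of_re_trace_mul_nonneg hV fun X hX => by
    simpa [← hVφ X hX.isHermitian] using hφ' 0 X hX
  have hVS : ∀ M ∈ S, (V * M).trace.re = 0 := fun M hM => by
    have hpos := hφ' ⟨M, hM⟩ 0 .zero
    have hneg := hφ' (-⟨M, hM⟩) 0 .zero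
    simp only [add_zero, NegMemClass.coe_neg, map_neg, Left.nonneg_neg_iff] at hpos hneg
    rw [← hVφ M (hS M hM)]
    linarith
  exact (hVφ T hT ▸ hφT).not_ge (hdual V hVpsd hVS)

end LMI

section KYP
variable {n m : Type*} [Fintype n]

/-- Controllability of the pair `(a, b)`, in its dual form: no nonzero row vector annihilates all
the blocks `aᵏ b` of the controllability matrix. -/
def IsControllable {R : Type*} [Semiring R] [DecidableEq n] (a : Matrix n n R) (b : Matrix n m R) :
    Prop :=
  ∀ p : n → R, (∀ k : ℕ, p ᵥ* (a ^ k * b) = 0) → p = 0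

/-- Solutions of the Kalman–Yakubovich–Popov inequality for a strictly proper system `(a, b, c)`:
`P` is a storage function with supply rate `Re (uᴴ y)`. -/
structure IsKYPSolution {R : Type*} [Ring R] [PartialOrder R] [StarRing R] (a : Matrix n n R)
    (b : Matrix n m R) (c : Matrix m n R) (P : Matrix n n R) : Prop where
  isHermitian : P.IsHermitian
  posSemidef : (-(P * a + aᴴ * P)).PosSemidef
  mul_eq : P * b = cᴴ

/-- The frequency domain inequality: the supplied power `Re (uᴴ y)` is nonnegative on every
oscillation `x e^{jωt}`, `u e^{jωt}` of the system. It makes sense at eigenvalues of `a` too. -/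
def FrequencyDomainInequality [Fintype m] (a : Matrix n n ℂ) (b : Matrix n m ℂ)
    (c : Matrix m n ℂ) : Prop :=
  ∀ (x : n → ℂ) (u : m → ℂ) (ω : ℝ), a *ᵥ x + b *ᵥ u = (I * ω) • x →
    0 ≤ (star u ⬝ᵥ (c *ᵥ x)).re

variable {a P : Matrix n n ℂ} {b : Matrix n m ℂ} {c : Matrix m n ℂ}

theorem mul_mul_eq_zero_of_dissipative {l : Type*} (hP : P.IsHermitian)
    (h : (-(P * a + aᴴ * P)).PosSemidef) {Z : Matrix n l ℂ} (hZ : P * Z = 0) :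
    P * (a * Z) = 0 := by
  have hZP : Zᴴ * P = 0 := by
    rw [← conjTranspose_eq_zero, conjTranspose_mul, hP.eq, conjTranspose_conjTranspose, hZ]
  have hNZ : -(P * a + aᴴ * P) * Z = -(P * (a * Z)) := by
    rw [Matrix.neg_mul, Matrix.add_mul, Matrix.mul_assoc, Matrix.mul_assoc, hZ, Matrix.mul_zero,
      add_zero]
  rw [← neg_eq_zero, ← hNZ]
  refine mul_eq_zero_of_conjTranspose_mul_mul_eq_zero h ?_
  rw [Matrix.mul_assoc, hNZ, Matrix.mul_neg, ← Matrix.mul_assoc, hZP, Matrix.zero_mul, neg_zero]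

/-- The linear part `P ↦ [Pa + aᴴP, Pb; bᴴP, 0]` of the Kalman–Yakubovich–Popov inequality. -/
def kypMap (a : Matrix n n ℂ) (b : Matrix n m ℂ) :
    Matrix n n ℂ →ₗ[ℝ] Matrix (n ⊕ m) (n ⊕ m) ℂ where
  toFun P := fromBlocks (P * a + aᴴ * P) (P * b) (bᴴ * P) 0
  map_add' P Q := by
    simp only [fromBlocks_add, Matrix.add_mul, Matrix.mul_add, add_add_add_comm, add_zero]
  map_smul' r P := by
    simp only [fromBlocks_smul, Matrix.smul_mul, Matrix.mul_smul, smul_add, smul_zero,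
      RingHom.id_apply]

theorem kypMap_apply (P : Matrix n n ℂ) :
    kypMap a b P = fromBlocks (P * a + aᴴ * P) (P * b) (bᴴ * P) 0 :=
  rfl

theorem isHermitian_kypMap (hP : P.IsHermitian) : (kypMap a b P).IsHermitian := by
  simp only [IsHermitian, kypMap_apply, fromBlocks_conjTranspose, conjTranspose_add,
    conjTranspose_mul, conjTranspose_conjTranspose, hP.eq, conjTranspose_zero, add_comm]

theorem trace_fromBlocks [Fintype m] {R : Type*} [AddCommMonoid R] (A : Matrix n n R)
    (B : Matrix n m R) (C : Matrix m n R) (D : Matrix m m R) :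
    (fromBlocks A B C D).trace = A.trace + D.trace := by
  simp [trace]

theorem trace_fromBlocks_mul_kypMap [Fintype m] (V₁₁ : Matrix n n ℂ) (V₁₂ : Matrix n m ℂ)
    (V₂₁ : Matrix m n ℂ) (V₂₂ : Matrix m m ℂ) (P : Matrix n n ℂ) :
    (fromBlocks V₁₁ V₁₂ V₂₁ V₂₂ * kypMap a b P).trace =
      ((a * V₁₁ + V₁₁ * aᴴ + (b * V₂₁ + V₁₂ * bᴴ)) * P).trace := by
  have h₁ : (V₁₁ * (P * a)).trace = (a * V₁₁ * P).trace := by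
    rw [← Matrix.mul_assoc, trace_mul_comm, Matrix.mul_assoc]
  have h₂ : (V₂₁ * (P * b)).trace = (b * V₂₁ * P).trace := by
    rw [← Matrix.mul_assoc, trace_mul_comm, Matrix.mul_assoc]
  rw [kypMap_apply, fromBlocks_multiply, trace_fromBlocks]
  simp only [Matrix.add_mul, Matrix.mul_add, trace_add, Matrix.mul_zero, add_zero, h₁, h₂,
    Matrix.mul_assoc]
  ring

theorem eq_zero_of_re_trace_mul_self_eq_zero {E : Matrix n n ℂ} (hE : E.IsHermitian)
    (h : (E * E).trace.re = 0) : E = 0 := by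
  have hnn := (posSemidef_self_mul_conjTranspose E).trace_nonneg
  rw [← trace_mul_conjTranspose_self_eq_zero_iff]
  rw [hE.eq] at hnn ⊢
  exact Complex.ext h (Complex.le_def.1 hnn).2.symm

theorem IsControllable.eq_zero_of_dissipative [DecidableEq n] (hab : IsControllable a b)
    (hP : P.IsHermitian) (h : (-(P * a + aᴴ * P)).PosSemidef) (hPb : P * b = 0) : P = 0 := by
  have hpow : ∀ k : ℕ, P * (a ^ k * b) = 0 := fun k => by
    induction k with
    | zero => simpa using hPb
    | succ k ih =>
      rw [pow_succ', Matrix.mul_assoc]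
      exact mul_mul_eq_zero_of_dissipative hP h ih
  funext i
  exact hab (P i) fun k => congrFun (hpow k) i

theorem exists_mul_eq_of_fromBlocks_posSemidef [Finite m] {V₁₁ : Matrix n n ℂ} {V₁₂ : Matrix n m ℂ}
    {V₂₁ : Matrix m n ℂ} {V₂₂ : Matrix m m ℂ} (hV : (fromBlocks V₁₁ V₁₂ V₂₁ V₂₂).PosSemidef) :
    ∃ G : Matrix m n ℂ, G * V₁₁ = V₂₁ := by
  classical
  obtain ⟨R, S, -, -, hRR, hRS, hRSR⟩ :=
    exists_sqrt_pinv (posSemidef_of_fromBlocks_posSemidef hV)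
  have hSRR : S * R * R = R := by rw [← hRS, hRSR]
  have hker : V₂₁ * (1 - S * R) = 0 := mul_eq_zero_of_fromBlocks_posSemidef hV (by
    rw [← hRR, mul_assoc, mul_sub, mul_one, ← mul_assoc R S R, hRSR, sub_self, mul_zero])
  refine ⟨V₂₁ * (S * S), ?_⟩
  rw [Matrix.mul_sub, Matrix.mul_one, sub_eq_zero] at hker
  rw [← hRR, Matrix.mul_assoc, mul_assoc, ← mul_assoc S R R, hSRR, ← hker]

variable [Fintype m]

theorem FrequencyDomainInequality.re_trace_nonneg (h : FrequencyDomainInequality a b c)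
    {G : Matrix m n ℂ} {V : Matrix n n ℂ} (hV : V.PosSemidef)
    (hlyap : (a + b * G) * V + V * (a + b * G)ᴴ = 0) : 0 ≤ (V * Gᴴ * c).trace.re := by
  classical
  obtain ⟨X, t, rfl, hX⟩ := exists_eq_mul_conjTranspose_of_lyapunov_eq_zero hV hlyap
  have htr : (X * Xᴴ * Gᴴ * c).trace = ((G * X)ᴴ * (c * X)).trace := by
    rw [conjTranspose_mul, ← Matrix.mul_assoc, trace_mul_comm _ X]
    simp only [Matrix.mul_assoc]
  rw [htr, trace, Complex.re_sum]
  refine Finset.sum_nonneg fun i _ => h (X.col i) (G *ᵥ X.col i) (t i) ?_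
  have hcol := congrArg (·.col i) hX
  rw [mulVec_mulVec, ← add_mulVec]
  calc (a + b * G) *ᵥ X.col i = (X * diagonal fun i => I * (t i : ℂ)).col i := hcol
    _ = (I * t i) • X.col i := by ext j; simp [mul_comm]

theorem FrequencyDomainInequality.re_trace_mul_nonneg (h : FrequencyDomainInequality a b c)
    {V : Matrix (n ⊕ m) (n ⊕ m) ℂ} (hV : V.PosSemidef)
    (hVkyp : ∀ P : Matrix n n ℂ, P.IsHermitian → (V * kypMap a b P).trace.re = 0) :
    0 ≤ (V * fromBlocks 0 cᴴ c 0).trace.re := by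
  obtain ⟨V₁₁, V₁₂, V₂₁, V₂₂, rfl⟩ : ∃ V₁₁ V₁₂ V₂₁ V₂₂, V = fromBlocks V₁₁ V₁₂ V₂₁ V₂₂ :=
    ⟨_, _, _, _, (fromBlocks_toBlocks V).symm⟩
  obtain ⟨h₁₁, h₁₂, h₂₁, -⟩ := isHermitian_fromBlocks_iff.1 hV.isHermitian
  obtain ⟨G, rfl⟩ := exists_mul_eq_of_fromBlocks_posSemidef hV
  obtain rfl : V₁₂ = V₁₁ * Gᴴ := by rw [← h₂₁, conjTranspose_mul, h₁₁.eq]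
  have hlyap : (a + b * G) * V₁₁ + V₁₁ * (a + b * G)ᴴ = 0 := by
    have hE : ((a + b * G) * V₁₁ + V₁₁ * (a + b * G)ᴴ).IsHermitian := by
      rw [IsHermitian, conjTranspose_add, conjTranspose_mul, conjTranspose_mul, h₁₁.eq,
        conjTranspose_conjTranspose, add_comm]
    have hsum : (a + b * G) * V₁₁ + V₁₁ * (a + b * G)ᴴ =
        a * V₁₁ + V₁₁ * aᴴ + (b * (G * V₁₁) + V₁₁ * Gᴴ * bᴴ) := by
      rw [conjTranspose_add, conjTranspose_mul, Matrix.add_mul, Matrix.mul_add, Matrix.mul_assoc,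
        ← Matrix.mul_assoc V₁₁, add_add_add_comm]
    refine eq_zero_of_re_trace_mul_self_eq_zero hE ?_
    nth_rw 1 [hsum]
    rw [← trace_fromBlocks_mul_kypMap, hVkyp _ hE]
  have hnn := h.re_trace_nonneg (posSemidef_of_fromBlocks_posSemidef hV) hlyap
  have hconj : (G * V₁₁ * cᴴ).trace.re = (V₁₁ * Gᴴ * c).trace.re := by
    rw [← Complex.conj_re, ← Complex.star_def, ← trace_conjTranspose]
    simp only [conjTranspose_mul, conjTranspose_conjTranspose, h₁₁.eq]
    rw [trace_mul_comm]
  rw [fromBlocks_multiply, trace_fromBlocks]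
  simp only [Matrix.mul_zero, zero_add, add_zero, Complex.add_re, hconj]
  linarith

theorem exists_isKYPSolution [DecidableEq n] (hab : IsControllable a b)
    (h : FrequencyDomainInequality a b c) : ∃ P, IsKYPSolution a b c P := by
  have hT : (fromBlocks 0 cᴴ c 0 : Matrix (n ⊕ m) (n ⊕ m) ℂ).IsHermitian :=
    .fromBlocks isHermitian_zero (conjTranspose_conjTranspose c) isHermitian_zero
  obtain ⟨_, ⟨P, hP, rfl⟩, hPT⟩ := exists_mem_sub_posSemidef
    (S := (selfAdjoint.submodule ℝ (Matrix n n ℂ)).map (kypMap a b))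
    (by rintro _ ⟨P, hP, rfl⟩; exact isHermitian_kypMap hP)
    (by
      rintro _ ⟨P, hP : P.IsHermitian, rfl⟩ hpsd
      have hPb : P * b = 0 := eq_zero_of_fromBlocks_zero_posSemidef hpsd
      have hneg : -P = 0 := hab.eq_zero_of_dissipative hP.neg
        (by simpa [add_comm] using posSemidef_of_fromBlocks_posSemidef hpsd)
        (by rw [Matrix.neg_mul, hPb, neg_zero])
      rw [neg_eq_zero.1 hneg, map_zero]) hT
    (fun V hV hS => h.re_trace_mul_nonneg hV fun P hP => hS _ ⟨P, hP, rfl⟩)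
  rw [kypMap_apply, sub_eq_add_neg, fromBlocks_neg, fromBlocks_add] at hPT
  rw [neg_zero, add_zero, zero_add] at hPT
  refine ⟨P, hP, posSemidef_of_fromBlocks_posSemidef hPT, ?_⟩
  exact (add_neg_eq_zero.1 (eq_zero_of_fromBlocks_zero_posSemidef hPT)).symm

end KYP

section Inertia

variable {V : Type*} [AddCommGroup V] [Module ℂ V] {B : V →ₗ⋆[ℂ] V →ₗ[ℂ] ℂ} {f : Module.End ℂ V}

theorem apply_add_smul_eq_smul {K V : Type*} [Field K] [AddCommGroup V] [Module K V]
    {f : Module.End K V} {v z : V} {l μ β : K} (hfv : f v = l • v) (hfz : f z = μ • z + β • v)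
    (hne : μ ≠ l) : f (z + (β / (μ - l)) • v) = μ • (z + (β / (μ - l)) • v) := by
  have hcoeff : β + β / (μ - l) * l = μ * (β / (μ - l)) := by
    have := sub_ne_zero.2 hne
    field_simp
    ring
  rw [map_add, map_smul, hfz, hfv, smul_smul, add_assoc, ← add_smul, hcoeff, smul_add, smul_smul]

/- A dissipative map remains dissipative when compressed to the orthogonal complement of an
eigenvector `v`. The point is that `z` is an eigenvector of `f` itself unless `B z z > 0`, as
dissipativity at `(1 - Re l) z + β v` shows. -/
theorem re_pos_of_eq_smul_add_smul (hB : B.IsSymm) (hf : ∀ x, (B x (f x)).re ≤ 0)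
    (heig : ∀ (μ : ℂ) (v : V), v ≠ 0 → f v = μ • v → μ.re ≤ 0 ∧ 0 < (B v v).re)
    {v z : V} {l μ β : ℂ} (hv : v ≠ 0) (hfv : f v = l • v) (hz : z ≠ 0) (hvz : B v z = 0)
    (hfz : f z = μ • z + β • v) : μ.re ≤ 0 ∧ 0 < (B z z).re := by
  have hvv := (heig l v hv hfv).2
  have hzv : B z v = 0 := hB.eq_iff.1 hvz
  have hre (x : V) : (B x x).im = 0 := Complex.conj_eq_iff_im.1 (hB.eq x x)
  have hμ : μ.re ≤ 0 := by
    obtain rfl | hne := eq_or_ne μ l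
    · exact (heig μ v hv hfv).1
    · refine (heig μ _ (fun h => hz ?_) (apply_add_smul_eq_smul hfv hfz hne)).1
      have h0 := congrArg (B v) h
      rw [map_add, map_smul, hvz, zero_add, map_zero, smul_eq_zero] at h0
      obtain h0 | h0 := h0
      · simpa [h0] using h
      · simp [h0] at hvv
  refine ⟨hμ, ?_⟩
  by_contra! hzz
  have hβ : Complex.normSq β * (B v v).re ≤ 0 := by
    have hx := hf (((1 - l.re : ℝ) : ℂ) • z + β • v)
    have hexp : (B (((1 - l.re : ℝ) : ℂ) • z + β • v) (f (((1 - l.re : ℝ) : ℂ) • z + β • v))).re =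
        (1 - l.re) ^ 2 * (μ.re * (B z z).re) + Complex.normSq β * (B v v).re := by
      simp only [Complex.ofReal_sub, Complex.ofReal_one, map_add, LinearMap.map_smulₛₗ, map_sub,
        map_one, Complex.conj_ofReal, map_smul, hfz, smul_add, hfv, LinearMap.add_apply,
        LinearMap.smul_apply, smul_eq_mul, hzv, mul_zero, add_zero, hvz, zero_add, Complex.add_re,
        Complex.mul_re, Complex.sub_re, Complex.one_re, Complex.ofReal_re, hre, sub_zero,
        Complex.sub_im, Complex.one_im, Complex.ofReal_im, sub_self, Complex.mul_im, zero_mul,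
        Complex.conj_re, Complex.conj_im, Complex.normSq_apply]
      ring
    nlinarith [mul_nonneg_of_nonpos_of_nonpos hμ hzz, sq_nonneg (1 - l.re)]
  have hβ0 : β = 0 := Complex.normSq_eq_zero.1
    (le_antisymm (nonpos_of_mul_nonpos_left hβ hvv) (Complex.normSq_nonneg β))
  refine hzz.not_gt (heig μ z hz ?_).2
  rw [hfz, hβ0, zero_smul, add_zero]

theorem exists_end_ker_apply_eq_add_smul {K V : Type*} [Field K] [AddCommGroup V] [Module K V]
    (f : Module.End K V) {φ : V →ₗ[K] K} {v : V} (hv : φ v ≠ 0) :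
    ∃ g : Module.End K (LinearMap.ker φ), ∀ z : LinearMap.ker φ, ∃ β : K, f z = g z + β • v :=
  ⟨((f - (φ ∘ₗ f).smulRight ((φ v)⁻¹ • v)) ∘ₗ (LinearMap.ker φ).subtype).codRestrict _
      fun z => by simp [hv],
    fun z => ⟨φ (f z) * (φ v)⁻¹, (by rw [mul_smul]; exact (sub_add_cancel _ _).symm)⟩⟩

theorem re_pos_of_forall_re_pos (hB : B.IsSymm) {v : V} (hv : 0 < (B v v).re)
    (h : ∀ z, z ≠ 0 → B v z = 0 → 0 < (B z z).re) {x : V} (hx : x ≠ 0) : 0 < (B x x).re := by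
  have hv0 : B v v ≠ 0 := fun h0 => by simp [h0] at hv
  obtain ⟨α, z, rfl, hvz⟩ : ∃ (α : ℂ) (z : V), z + α • v = x ∧ B v z = 0 :=
    ⟨B v x / B v v, x - (B v x / B v v) • v, sub_add_cancel _ _, by simp [hv0]⟩
  have hzv : B z v = 0 := hB.eq_iff.1 hvz
  have hre : (B v v).im = 0 := Complex.conj_eq_iff_im.1 (hB.eq v v)
  have hexp : (B (z + α • v) (z + α • v)).re = (B z z).re + Complex.normSq α * (B v v).re := by
    simp only [map_add, LinearMap.map_smulₛₗ, LinearMap.add_apply, map_smul, hzv, smul_eq_mul,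
      mul_zero, add_zero, LinearMap.smul_apply, hvz, zero_add, Complex.add_re, Complex.mul_re,
      Complex.conj_re, hre, sub_zero, Complex.conj_im, Complex.mul_im, Complex.normSq_apply]
    ring
  rw [hexp]
  obtain rfl | hz := eq_or_ne z 0
  · have hα : α ≠ 0 := fun h0 => hx (by simp [h0])
    simpa using mul_pos (Complex.normSq_pos.2 hα) hv
  · exact add_pos_of_pos_of_nonneg (h z hz hvz) (mul_nonneg (Complex.normSq_nonneg α) hv.le)

theorem re_pos_of_dissipative {V : Type*} [AddCommGroup V] [Module ℂ V] [FiniteDimensional ℂ V]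
    {B : V →ₗ⋆[ℂ] V →ₗ[ℂ] ℂ} {f : Module.End ℂ V} (hB : B.IsSymm)
    (hf : ∀ x, (B x (f x)).re ≤ 0)
    (heig : ∀ (μ : ℂ) (v : V), v ≠ 0 → f v = μ • v → μ.re ≤ 0 ∧ 0 < (B v v).re)
    {x : V} (hx : x ≠ 0) : 0 < (B x x).re := by
  induction hd : Module.finrank ℂ V using Nat.strong_induction_on generalizing V with
  | _ d ih =>
    have : Nontrivial V := ⟨x, 0, hx⟩
    obtain ⟨l, hl⟩ := Module.End.exists_eigenvalue f
    obtain ⟨v, hv⟩ := hl.exists_hasEigenvector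
    have hfv : f v = l • v := hv.apply_eq_smul
    have hvv := (heig l v hv.2 hfv).2
    have hvv0 : B v v ≠ 0 := fun h => by simp [h] at hvv
    obtain ⟨g, hg⟩ := exists_end_ker_apply_eq_add_smul f hvv0
    let W := LinearMap.ker (B v)
    have hdim : Module.finrank ℂ W < d :=
      hd ▸ Submodule.finrank_lt fun h => hvv0 (LinearMap.mem_ker.1 (h.ge Submodule.mem_top))
    have hdiss (y : W) : (B y (g y)).re ≤ 0 := by
      obtain ⟨β, hβ⟩ := hg y
      have hyv : B y v = 0 := hB.eq_iff.1 y.2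
      simpa [hβ, hyv] using hf y
    have heig' (μ : ℂ) (y : W) (hy : y ≠ 0) (hgy : g y = μ • y) :
        μ.re ≤ 0 ∧ 0 < (B y y).re := by
      obtain ⟨β, hβ⟩ := hg y
      rw [hgy] at hβ
      exact re_pos_of_eq_smul_add_smul hB hf heig hv.2 hfv (Submodule.coe_eq_zero.not.2 hy) y.2 hβ
    exact re_pos_of_forall_re_pos hB hvv (fun z hz hvz => ih _ hdim (B := B.domRestrict₁₂ W W)
      (hB.domRestrict W) hdiss heig' (x := ⟨z, hvz⟩) (Subtype.coe_ne_coe.1 hz) rfl) hx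

end Inertia

section Resolvent
variable {n m k : Type*} [Fintype n] [DecidableEq n] [Fintype m] {a E : Matrix n n ℂ}
  {b : Matrix n m ℂ} {c : Matrix k n ℂ} {F : Matrix m n ℂ} {K : Matrix k m ℂ} {l s : ℂ}

omit [Fintype m] in
theorem isUnit_det_smul_one_sub (hs : s ∉ spectrum ℂ a) : IsUnit (s • 1 - a).det := by
  rwa [spectrum.notMem_iff, Algebra.algebraMap_eq_smul_one, isUnit_iff_isUnit_det] at hs

theorem eventually_notMem_spectrum (a : Matrix n n ℂ) (l : ℂ) :
    ∀ᶠ s in 𝓝[≠] l, s ∉ spectrum ℂ a := by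
  have hfin : (spectrum ℂ a \ {l}).Finite := (finite_spectrum a).subset Set.sdiff_subset
  filter_upwards [(hfin.isClosed.isOpen_compl.eventually_mem (x := l) (by simp)).filter_mono
    nhdsWithin_le_nhds, self_mem_nhdsWithin] with s hs hne h
  exact hs ⟨h, hne⟩

theorem tendsto_sub_self (l : ℂ) : Tendsto (fun s : ℂ => s - l) (𝓝[≠] l) (𝓝 0) :=
  (Continuous.tendsto' (f := (· - l)) (by fun_prop) l 0 (sub_self l)).mono_left
    nhdsWithin_le_nhds

omit [Fintype n] in
theorem tendsto_one_add_smul (E : Matrix n n ℂ) (l : ℂ) :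
    Tendsto (fun s : ℂ => 1 + (s - l) • E) (𝓝[≠] l) (𝓝 1) := by
  simpa using (tendsto_sub_self l).smul_const E |>.const_add 1

theorem eventually_isUnit_det_one_add_smul (E : Matrix n n ℂ) (l : ℂ) :
    ∀ᶠ s in 𝓝[≠] l, IsUnit (1 + (s - l) • E).det := by
  have hdet : Tendsto (fun s : ℂ => (1 + (s - l) • E).det) (𝓝[≠] l) (𝓝 1) := by
    simpa [Function.comp_def] using
      (continuous_id.matrix_det.tendsto (1 : Matrix n n ℂ)).comp (tendsto_one_add_smul E l)
  exact (hdet.eventually_ne one_ne_zero).mono fun s hs => hs.isUnit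

theorem tendsto_inv_one_add_smul (E : Matrix n n ℂ) (l : ℂ) :
    Tendsto (fun s : ℂ => (1 + (s - l) • E)⁻¹) (𝓝[≠] l) (𝓝 1) := by
  have hinv : ContinuousAt Inv.inv (1 : Matrix n n ℂ) :=
    continuousAt_matrix_inv _ (by simp [Ring.inverse_eq_inv'])
  simpa [Function.comp_def] using hinv.tendsto.comp (tendsto_one_add_smul E l)

theorem smul_one_sub_mul_add_mul (h : (l • 1 - a) * E + b * F = 1) (s : ℂ) :
    (s • 1 - a) * E + b * F = 1 + (s - l) • E := by
  have hshift : (s • 1 - a) * E = (l • 1 - a) * E + (s - l) • E := by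
    simp only [Matrix.sub_mul, Matrix.smul_mul, Matrix.one_mul, sub_smul]
    abel
  rw [hshift, add_right_comm, h]

theorem tendsto_smul_mul_inv (h : (l • 1 - a) * E + b * F = 1)
    (hK : Tendsto (fun s : ℂ => (s - l) • (c * (s • 1 - a)⁻¹ * b)) (𝓝[≠] l) (𝓝 K)) :
    Tendsto (fun s : ℂ => (s - l) • (c * (s • 1 - a)⁻¹)) (𝓝[≠] l) (𝓝 (K * F)) := by
  have hcont : Continuous fun p : Matrix k n ℂ × Matrix k m ℂ × Matrix n n ℂ =>
      (p.1 + p.2.1 * F) * p.2.2 := by fun_prop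
  have hcE : Tendsto (fun s : ℂ => (s - l) • (c * E)) (𝓝[≠] l) (𝓝 0) := by
    simpa using (tendsto_sub_self l).smul_const (c * E)
  have hlim := (hcont.tendsto (0, K, 1)).comp
    (hcE.prodMk_nhds (hK.prodMk_nhds (tendsto_inv_one_add_smul E l)))
  simp only [zero_add, Matrix.mul_one] at hlim
  refine hlim.congr' ?_
  filter_upwards [eventually_notMem_spectrum a l, eventually_isUnit_det_one_add_smul E l]
    with s hs hu
  have hfactor : c * E + c * (s • 1 - a)⁻¹ * b * F = c * (s • 1 - a)⁻¹ * (1 + (s - l) • E) := by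
    rw [← smul_one_sub_mul_add_mul h, Matrix.mul_add, ← Matrix.mul_assoc (c * _) (s • 1 - a),
      nonsing_inv_mul_cancel_right _ _ (isUnit_det_smul_one_sub hs), ← Matrix.mul_assoc (c * _) b]
  rw [Function.comp_apply, Matrix.smul_mul, ← smul_add, hfactor,
    ← Matrix.smul_mul, mul_nonsing_inv_cancel_right _ _ hu]

/-- The transfer matrix `c (s - a)⁻¹ b` of the strictly proper system `(a, b, c)`. -/
noncomputable def transferMatrix (a : Matrix n n ℂ) (b : Matrix n m ℂ) (c : Matrix k n ℂ) (s : ℂ) :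
    Matrix k m ℂ :=
  c * (s • 1 - a)⁻¹ * b

theorem mul_mulVec_eq_of_tendsto_transferMatrix (h : (l • 1 - a) * E + b * F = 1)
    (hK : Tendsto (fun s : ℂ => (s - l) • transferMatrix a b c s) (𝓝[≠] l) (𝓝 K)) {x : n → ℂ}
    (hx : a *ᵥ x = l • x) : K *ᵥ (F *ᵥ x) = c *ᵥ x := by
  have hcont : Continuous fun M : Matrix k n ℂ => M *ᵥ x := by fun_prop
  rw [mulVec_mulVec]
  refine tendsto_nhds_unique ((hcont.tendsto _).comp (tendsto_smul_mul_inv h hK))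
    (tendsto_const_nhds.congr' ?_)
  filter_upwards [eventually_notMem_spectrum a l] with s hs
  have hsx : (s - l) • x = (s • 1 - a) *ᵥ x := by
    rw [sub_mulVec, smul_mulVec, one_mulVec, hx, sub_smul]
  rw [Function.comp_apply, smul_mulVec, ← mulVec_smul, hsx, mulVec_mulVec,
    nonsing_inv_mul_cancel_right _ _ (isUnit_det_smul_one_sub hs)]

end Resolvent

section Hautus
variable {n m : Type*} [Fintype n] [DecidableEq n] {a : Matrix n n ℂ} {b : Matrix n m ℂ}

theorem IsControllable.eq_zero_of_vecMul_eq_smul {R : Type*} [CommSemiring R] {a : Matrix n n R}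
    {b : Matrix n m R} (h : IsControllable a b) {p : n → R} {l : R} (hpa : p ᵥ* a = l • p)
    (hpb : p ᵥ* b = 0) : p = 0 := by
  have hpow (k : ℕ) : p ᵥ* a ^ k = l ^ k • p := by
    induction k with
    | zero => simp
    | succ k ih => rw [pow_succ, ← vecMul_vecMul, ih, smul_vecMul, hpa, smul_smul, pow_succ]
  exact h p fun k => by rw [← vecMul_vecMul, hpow, smul_vecMul, hpb, smul_zero]

/-- Observability of the pair `(a, c)`, in its dual form: no nonzero vector is annihilated by all
the blocks `c aᵏ` of the observability matrix. -/
def IsObservable {R : Type*} [Semiring R] (a : Matrix n n R) (c : Matrix m n R) : Prop :=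
  ∀ x : n → R, (∀ k : ℕ, (c * a ^ k) *ᵥ x = 0) → x = 0

theorem IsObservable.eq_zero_of_mulVec_eq_smul {R : Type*} [CommSemiring R] {a : Matrix n n R}
    {c : Matrix m n R} (h : IsObservable a c) {x : n → R} {l : R} (hax : a *ᵥ x = l • x)
    (hcx : c *ᵥ x = 0) : x = 0 := by
  have hpow (k : ℕ) : a ^ k *ᵥ x = l ^ k • x := by
    induction k with
    | zero => simp
    | succ k ih => rw [pow_succ', ← mulVec_mulVec, ih, mulVec_smul, hax, smul_smul, pow_succ]
  exact h x fun k => by rw [← mulVec_mulVec, hpow, mulVec_smul, hcx, smul_zero]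

theorem IsControllable.exists_mul_add_mul_eq_one [Fintype m] (h : IsControllable a b) (l : ℂ) :
    ∃ (E : Matrix n n ℂ) (F : Matrix m n ℂ), (l • 1 - a) * E + b * F = 1 := by
  set M := fromCols (l • 1 - a) b
  have hM : IsUnit (M * Mᴴ) := by
    refine vecMul_injective_iff_isUnit.1 ((injective_iff_map_eq_zero (vecMulLinear ..)).2 ?_)
    intro p hp
    replace hp := (vecMul_self_mul_conjTranspose_eq_zero M p).1 hp
    rw [vecMul_fromCols, ← Sum.elim_zero_zero, Sum.elim_eq_iff] at hp
    refine h.eq_zero_of_vecMul_eq_smul (l := l) (Eq.symm ?_) hp.2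
    simpa [vecMul_sub, vecMul_smul, sub_eq_zero] using hp.1
  refine ⟨(l • 1 - a)ᴴ * (M * Mᴴ)⁻¹, bᴴ * (M * Mᴴ)⁻¹, ?_⟩
  have hMM : M * Mᴴ = (l • 1 - a) * (l • 1 - a)ᴴ + b * bᴴ := by
    rw [conjTranspose_fromCols_eq_fromRows_conjTranspose, fromCols_mul_fromRows]
  rw [← Matrix.mul_assoc, ← Matrix.mul_assoc, ← Matrix.add_mul, ← hMM,
    mul_nonsing_inv _ ((isUnit_iff_isUnit_det _).1 hM)]

theorem IsControllable.exists_tendsto_of_mulVec_add_mulVec_eq [Fintype m]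
    (h : IsControllable a b) {l : ℂ} {x : n → ℂ} {u : m → ℂ} (hxu : a *ᵥ x + b *ᵥ u = l • x) :
    ∃ (x' : ℂ → n → ℂ) (u' : ℂ → m → ℂ), Tendsto x' (𝓝[≠] l) (𝓝 x) ∧
      Tendsto u' (𝓝[≠] l) (𝓝 u) ∧ ∀ᶠ s in 𝓝[≠] l, a *ᵥ x' s + b *ᵥ u' s = s • x' s := by
  obtain ⟨E, F, hEF⟩ := h.exists_mul_add_mul_eq_one l
  set y : ℂ → n → ℂ := fun s => (s - l) • ((1 + (s - l) • E)⁻¹ *ᵥ x) with hy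
  have hy0 : Tendsto y (𝓝[≠] l) (𝓝 0) := by
    have hcont : Continuous fun M : Matrix n n ℂ => M *ᵥ x := by fun_prop
    simpa using (tendsto_sub_self l).smul
      ((hcont.tendsto _).comp (tendsto_inv_one_add_smul E l))
  have hE0 : Tendsto (fun s => E *ᵥ y s) (𝓝[≠] l) (𝓝 0) := by
    have hcont : Continuous fun v : n → ℂ => E *ᵥ v := by fun_prop
    simpa [Function.comp_def] using (hcont.tendsto _).comp hy0
  have hF0 : Tendsto (fun s => F *ᵥ y s) (𝓝[≠] l) (𝓝 0) := by
    have hcont : Continuous fun v : n → ℂ => F *ᵥ v := by fun_prop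
    simpa [Function.comp_def] using (hcont.tendsto _).comp hy0
  refine ⟨fun s => x - E *ᵥ y s, fun s => u + F *ᵥ y s, by simpa using hE0.const_sub x,
    by simpa using hF0.const_add u, ?_⟩
  filter_upwards [eventually_isUnit_det_one_add_smul E l] with s hs
  have hys : s • E *ᵥ y s - a *ᵥ (E *ᵥ y s) + b *ᵥ (F *ᵥ y s) = (s - l) • x := by
    rw [← smul_mulVec, mulVec_mulVec, mulVec_mulVec, ← sub_mulVec, ← add_mulVec,
      ← Matrix.one_mul E, ← Matrix.smul_mul, Matrix.one_mul, ← Matrix.sub_mul,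
      smul_one_sub_mul_add_mul hEF]
    rw [hy, mulVec_smul, mulVec_mulVec, mul_nonsing_inv _ hs, one_mulVec]
  rw [mulVec_sub, mulVec_add, smul_sub, ← sub_eq_zero]
  rw [sub_smul, ← hxu] at hys
  linear_combination (exp := 1) hys

end Hautus

section Spectrum
variable {n K : Type*} [Fintype n] [DecidableEq n] [Field K] {a : Matrix n n K} {μ : K}

theorem mem_spectrum_iff_exists_mulVec_eq_smul :
    μ ∈ spectrum K a ↔ ∃ x, x ≠ 0 ∧ a *ᵥ x = μ • x := by
  rw [spectrum.mem_iff, isUnit_iff_isUnit_det, isUnit_iff_ne_zero, not_not,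
    ← exists_mulVec_eq_zero_iff]
  simp only [Algebra.algebraMap_eq_smul_one, sub_mulVec, smul_mulVec, one_mulVec, sub_eq_zero,
    eq_comm]

theorem mem_spectrum_iff_exists_vecMul_eq_smul :
    μ ∈ spectrum K a ↔ ∃ p, p ≠ 0 ∧ p ᵥ* a = μ • p := by
  rw [spectrum.mem_iff, isUnit_iff_isUnit_det, isUnit_iff_ne_zero, not_not,
    ← exists_vecMul_eq_zero_iff]
  simp only [Algebra.algebraMap_eq_smul_one, vecMul_sub, vecMul_smul, vecMul_one, sub_eq_zero,
    eq_comm]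

end Spectrum

section PositiveReal
variable {n m : Type*} [Fintype n] [DecidableEq n] {a : Matrix n n ℂ} {b : Matrix n m ℂ}
  {c : Matrix m n ℂ}

/-- Positive realness of the transfer matrix `G(s) = c (s - a)⁻¹ b`, as far as it can be tested on
the imaginary axis away from the origin: `G + Gᴴ` is nonnegative at the regular points, and the
poles are simple with nonnegative residues. -/
structure IsPositiveRealOnAxis (a : Matrix n n ℂ) (b : Matrix n m ℂ) (c : Matrix m n ℂ) :
    Prop where
  posSemidef : ∀ ω : ℝ, ω ≠ 0 → I * ω ∉ spectrum ℂ a →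
    (transferMatrix a b c (I * ω) + (transferMatrix a b c (I * ω))ᴴ).PosSemidef
  residue : ∀ ω : ℝ, ω ≠ 0 → I * ω ∈ spectrum ℂ a → ∃ K : Matrix m m ℂ,
    Tendsto (fun s : ℂ => (s - I * ω) • transferMatrix a b c s) (𝓝[≠] (I * ω)) (𝓝 K) ∧
      K.PosSemidef

variable [Fintype m]

theorem transferMatrix_mulVec {s : ℂ} (hs : s ∉ spectrum ℂ a) {x : n → ℂ} {u : m → ℂ}
    (h : a *ᵥ x + b *ᵥ u = s • x) : transferMatrix a b c s *ᵥ u = c *ᵥ x := by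
  have hbu : b *ᵥ u = (s • 1 - a) *ᵥ x := by
    rw [sub_mulVec, smul_mulVec, one_mulVec, ← h, add_sub_cancel_left]
  rw [transferMatrix, ← mulVec_mulVec, hbu, mulVec_mulVec,
    nonsing_inv_mul_cancel_right _ _ (isUnit_det_smul_one_sub hs)]

theorem star_star_dotProduct_mulVec {k : Type*} [Fintype k] (M : Matrix k m ℂ) (x : k → ℂ)
    (y : m → ℂ) : star (star x ⬝ᵥ (M *ᵥ y)) = star y ⬝ᵥ (Mᴴ *ᵥ x) := by
  rw [← star_dotProduct, star_mulVec, ← dotProduct_mulVec]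

theorem re_dotProduct_mulVec_nonneg {G : Matrix m m ℂ} (h : (G + Gᴴ).PosSemidef) (u : m → ℂ) :
    0 ≤ (star u ⬝ᵥ (G *ᵥ u)).re := by
  have hre := (Complex.le_def.1 (h.dotProduct_mulVec_nonneg u)).1
  rw [add_mulVec, dotProduct_add, ← star_star_dotProduct_mulVec] at hre
  simp only [Complex.zero_re, Complex.add_re, Complex.star_def, Complex.conj_re] at hre
  linarith

theorem tendsto_I_mul_ofReal (ω : ℝ) :
    Tendsto (fun t : ℝ => I * t) (𝓝[≠] ω) (𝓝[≠] (I * ω)) :=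
  tendsto_nhdsWithin_of_tendsto_nhds_of_eventually_within _
    ((Continuous.tendsto (by fun_prop) ω).mono_left nhdsWithin_le_nhds)
    (eventually_mem_nhdsWithin.mono fun t ht => by simpa using ht)

theorem IsPositiveRealOnAxis.frequencyDomainInequality (hab : IsControllable a b)
    (h : IsPositiveRealOnAxis a b c) : FrequencyDomainInequality a b c := by
  intro x u ω hxu
  obtain ⟨x', u', hx', hu', hsol⟩ := hab.exists_tendsto_of_mulVec_add_mulVec_eq hxu
  have hcont : Continuous fun p : (n → ℂ) × (m → ℂ) => (star p.2 ⬝ᵥ (c *ᵥ p.1)).re := by fun_prop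
  have hlim := ((hcont.tendsto (x, u)).comp (hx'.prodMk_nhds hu')).comp (tendsto_I_mul_ofReal ω)
  refine ge_of_tendsto hlim ?_
  have hne : ∀ᶠ t : ℝ in 𝓝[≠] ω, t ≠ 0 := by
    obtain rfl | hω := eq_or_ne ω 0
    · exact eventually_mem_nhdsWithin
    · exact (eventually_ne_nhds hω).filter_mono nhdsWithin_le_nhds
  filter_upwards [(tendsto_I_mul_ofReal ω).eventually hsol, hne,
    (tendsto_I_mul_ofReal ω).eventually (eventually_notMem_spectrum a _)] with t ht ht0 hts
  simpa [transferMatrix_mulVec hts ht] using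
    re_dotProduct_mulVec_nonneg (h.posSemidef t ht0 hts) (u' (I * t))

end PositiveReal

section Storage
variable {n m : Type*} [Fintype n] {a P : Matrix n n ℂ} {b : Matrix n m ℂ} {c : Matrix m n ℂ}

theorem star_dotProduct_mulVec_eq_of_mulVec_eq_smul {v : n → ℂ} {μ : ℂ}
    (hv : a *ᵥ v = μ • v) :
    star v ⬝ᵥ (-(P * a + aᴴ * P) *ᵥ v) = (-(2 * μ.re)) • (star v ⬝ᵥ (P *ᵥ v)) := by
  have hleft : star v ᵥ* aᴴ = star μ • star v := by rw [← star_mulVec, hv, star_smul]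
  rw [neg_mulVec, add_mulVec, ← mulVec_mulVec, ← mulVec_mulVec, hv, mulVec_smul, dotProduct_neg,
    dotProduct_add, dotProduct_smul, dotProduct_mulVec _ aᴴ, hleft, smul_dotProduct, ← add_smul,
    Complex.star_def, Complex.add_conj, smul_eq_mul, Complex.real_smul, Complex.ofReal_neg, neg_mul]

theorem vecMul_eq_smul_of_dissipative (hPa : (-(P * a + aᴴ * P)).PosSemidef) {v : n → ℂ} {μ : ℂ}
    (hv : a *ᵥ v = μ • v) (h : μ.re = 0 ∨ star v ⬝ᵥ (P *ᵥ v) = 0) :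
    star (P *ᵥ v) ᵥ* a = (-star μ) • star (P *ᵥ v) := by
  have hN : -(P * a + aᴴ * P) *ᵥ v = 0 := by
    rw [← hPa.dotProduct_mulVec_zero_iff, star_dotProduct_mulVec_eq_of_mulVec_eq_smul hv]
    obtain h | h := h <;> simp [h]
  rw [neg_mulVec, neg_eq_zero, add_mulVec, ← mulVec_mulVec, ← mulVec_mulVec, hv, mulVec_smul] at hN
  rw [← star_inj, star_vecMul, star_star, star_smul, star_star, star_neg, star_star, neg_smul]
  exact eq_neg_of_add_eq_zero_right hN

theorem posDef_of_dissipative (hP : P.IsHermitian) (hPa : (-(P * a + aᴴ * P)).PosSemidef)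
    (heig : ∀ (μ : ℂ) (v : n → ℂ), v ≠ 0 → a *ᵥ v = μ • v →
      μ.re ≤ 0 ∧ 0 < star v ⬝ᵥ (P *ᵥ v)) : P.PosDef := by
  let B : (n → ℂ) →ₗ⋆[ℂ] (n → ℂ) →ₗ[ℂ] ℂ :=
    LinearMap.mk₂'ₛₗ (starRingEnd ℂ) (RingHom.id ℂ) (fun x y => star x ⬝ᵥ (P *ᵥ y))
      (fun x y z => by rw [star_add, add_dotProduct])
      (fun r x y => by rw [star_smul, smul_dotProduct]; rfl)
      (fun x y z => by rw [mulVec_add, dotProduct_add])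
      (fun r x y => by rw [mulVec_smul, dotProduct_smul]; rfl)
  have hB : B.IsSymm := ⟨fun x y => by
    change star (star x ⬝ᵥ (P *ᵥ y)) = star y ⬝ᵥ (P *ᵥ x)
    rw [star_star_dotProduct_mulVec, hP.eq]⟩
  have hdiss (x : n → ℂ) : (B x (a *ᵥ x)).re ≤ 0 := by
    have hG : -(P * a) + (-(P * a))ᴴ = -(P * a + aᴴ * P) := by
      rw [conjTranspose_neg, conjTranspose_mul, hP.eq, neg_add]
    have := re_dotProduct_mulVec_nonneg (hG ▸ hPa) x
    rw [neg_mulVec, ← mulVec_mulVec, dotProduct_neg, Complex.neg_re] at this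
    exact neg_nonneg.1 this
  refine .of_dotProduct_mulVec_pos hP fun x hx => Complex.pos_iff.2 ⟨?_, ?_⟩
  · exact re_pos_of_dissipative (f := mulVecLin a) hB hdiss
      (fun μ v hv0 hv => (heig μ v hv0 hv).imp_right fun h => (Complex.pos_iff.1 h).1) hx
  · exact (hP.im_star_dotProduct_mulVec_self x).symm

namespace IsKYPSolution

theorem eq_conjTranspose_mul (h : IsKYPSolution a b c P) : c = bᴴ * P := by
  rw [← conjTranspose_conjTranspose c, ← h.mul_eq, conjTranspose_mul, h.isHermitian.eq]

variable [DecidableEq n]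

theorem eq_zero_of_mulVec_eq_zero (h : IsKYPSolution a b c P) (hac : IsObservable a c)
    {x : n → ℂ} (hx : P *ᵥ x = 0) : x = 0 := by
  have hpow (k : ℕ) : P *ᵥ (a ^ k *ᵥ x) = 0 := by
    induction k with
    | zero => simpa using hx
    | succ k ih =>
      have hZ : P * replicateCol Unit (a ^ k *ᵥ x) = 0 := by
        rw [← replicateCol_mulVec, ih, replicateCol_zero]
      have := mul_mul_eq_zero_of_dissipative h.isHermitian h.posSemidef hZ
      rw [← replicateCol_mulVec, ← replicateCol_mulVec, replicateCol_eq_zero] at this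
      rw [pow_succ', ← mulVec_mulVec, this]
  exact hac x fun k => by
    rw [h.eq_conjTranspose_mul, Matrix.mul_assoc, ← mulVec_mulVec, ← mulVec_mulVec, hpow,
      mulVec_zero]

theorem pos_of_re_neg (h : IsKYPSolution a b c P) (hac : IsObservable a c)
    (hspec : ∀ μ ∈ spectrum ℂ a, μ.re ≤ 0) {v : n → ℂ} {μ : ℂ} (hv0 : v ≠ 0)
    (hv : a *ᵥ v = μ • v) (hμ : μ.re < 0) : 0 < star v ⬝ᵥ (P *ᵥ v) := by
  have hnonneg : 0 ≤ star v ⬝ᵥ (P *ᵥ v) := by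
    have := h.posSemidef.dotProduct_mulVec_nonneg v
    rw [star_dotProduct_mulVec_eq_of_mulVec_eq_smul hv] at this
    exact nonneg_of_smul_nonneg_of_pos_left this (by linarith)
  refine hnonneg.lt_of_ne' fun h0 => ?_
  have hPv : star (P *ᵥ v) ≠ 0 := star_ne_zero.2 fun h0 =>
    hv0 (h.eq_zero_of_mulVec_eq_zero hac h0)
  have := hspec _ (mem_spectrum_iff_exists_vecMul_eq_smul.2
    ⟨_, hPv, vecMul_eq_smul_of_dissipative h.posSemidef hv (.inr h0)⟩)
  simp only [Complex.star_def, Complex.neg_re, Complex.conj_re] at this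
  linarith

theorem pos_of_re_eq_zero [Finite m] (h : IsKYPSolution a b c P) (hab : IsControllable a b)
    (hac : IsObservable a c) (hpr : IsPositiveRealOnAxis a b c) {v : n → ℂ} {ω : ℝ} (hv0 : v ≠ 0)
    (hv : a *ᵥ v = (I * ω) • v) (hω : ω ≠ 0) : 0 < star v ⬝ᵥ (P *ᵥ v) := by
  have := Fintype.ofFinite m
  obtain ⟨K, hK, hKpos⟩ := hpr.residue ω hω
    (mem_spectrum_iff_exists_mulVec_eq_smul.2 ⟨v, hv0, hv⟩)
  obtain ⟨E, F, hEF⟩ := hab.exists_mul_add_mul_eq_one (I * ω)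
  have hKF : K *ᵥ (F *ᵥ v) = c *ᵥ v := mul_mulVec_eq_of_tendsto_transferMatrix hEF hK hv
  have hPv : star (P *ᵥ v) = star (c *ᵥ v) ᵥ* F := by
    have hleft : star (P *ᵥ v) ᵥ* (((I * ω) • 1 - a) * E) = 0 := by
      rw [← vecMul_vecMul, vecMul_sub, vecMul_smul, vecMul_one,
        vecMul_eq_smul_of_dissipative h.posSemidef hv (.inl (by simp))]
      simp
    have hb : star (P *ᵥ v) ᵥ* b = star (c *ᵥ v) := by
      rw [star_mulVec, vecMul_vecMul, h.isHermitian.eq, h.mul_eq, star_mulVec]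
    rw [← vecMul_one (star (P *ᵥ v)), ← hEF, vecMul_add, hleft, zero_add, ← vecMul_vecMul, hb]
  have hform : star v ⬝ᵥ (P *ᵥ v) = star (F *ᵥ v) ⬝ᵥ (K *ᵥ (F *ᵥ v)) := by
    rw [dotProduct_mulVec, ← h.isHermitian.eq, ← star_mulVec, hPv, ← dotProduct_mulVec, ← hKF,
      star_mulVec, ← dotProduct_mulVec, hKpos.isHermitian.eq]
  rw [hform]
  refine (hKpos.dotProduct_mulVec_nonneg _).lt_of_ne' fun h0 => hv0 ?_
  rw [hKpos.dotProduct_mulVec_zero_iff, hKF] at h0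
  exact hac.eq_zero_of_mulVec_eq_smul hv h0

theorem posDef [Finite m] (h : IsKYPSolution a b c P) (hab : IsControllable a b)
    (hac : IsObservable a c) (hpr : IsPositiveRealOnAxis a b c)
    (hspec : ∀ μ ∈ spectrum ℂ a, μ ≠ 0 ∧ μ.re ≤ 0) : P.PosDef := by
  refine posDef_of_dissipative h.isHermitian h.posSemidef fun μ v hv0 hv => ?_
  have hμ := hspec μ (mem_spectrum_iff_exists_mulVec_eq_smul.2 ⟨v, hv0, hv⟩)
  refine ⟨hμ.2, ?_⟩
  obtain hneg | hzero := hμ.2.lt_or_eq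
  · exact h.pos_of_re_neg hac (fun μ hμ => (hspec μ hμ).2) hv0 hv hneg
  · have hμI : μ = I * μ.im := Complex.ext (by simpa using hzero) (by simp)
    refine h.pos_of_re_eq_zero hab hac hpr hv0 (hμI ▸ hv) fun him => hμ.1 ?_
    rw [hμI, him, Complex.ofReal_zero, mul_zero]

end IsKYPSolution

end Storage

section Dissipative
variable {n : Type*} [Fintype n] [DecidableEq n] {a P : Matrix n n ℂ} {l : ℂ}

theorem exists_projection_of_dissipative {N : Matrix n n ℂ} (hN : (-(N + Nᴴ)).PosSemidef) :
    ∃ Z : Matrix n n ℂ, Z.IsHermitian ∧ Z * Z = Z ∧ N * Z = 0 ∧ Z * N = 0 ∧ IsUnit (Z - N) := by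
  obtain ⟨R, S, hR, hS, hRR, hRS, hRSR⟩ := exists_sqrt_pinv (posSemidef_conjTranspose_mul_self N)
  have hZ : (1 - S * R).IsHermitian := by
    rw [IsHermitian, conjTranspose_sub, conjTranspose_one, conjTranspose_mul, hR.eq, hS.eq, hRS]
  have hRZ : R * (1 - S * R) = 0 := by
    rw [mul_sub, mul_one, ← mul_assoc, hRSR, sub_self]
  have hZZ : (1 - S * R) * (1 - S * R) = 1 - S * R := by
    nth_rw 1 [sub_mul, one_mul, mul_assoc, hRZ, mul_zero, sub_zero]
  have hNZ : N * (1 - S * R) = 0 := by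
    rw [← conjTranspose_mul_self_mul_eq_zero, ← hRR, mul_assoc, hRZ, mul_zero]
  have hZN : (1 - S * R) * N = 0 := by
    have : -(N + Nᴴ) * (1 - S * R) = 0 := by
      refine mul_eq_zero_of_conjTranspose_mul_mul_eq_zero hN ?_
      rw [hZ.eq, mul_assoc, neg_mul, add_mul, hNZ, zero_add, mul_neg, ← mul_assoc]
      nth_rw 1 [← hZ.eq]
      rw [← conjTranspose_mul, hNZ, conjTranspose_zero, zero_mul, neg_zero]
    rw [neg_mul, add_mul, hNZ, zero_add, neg_eq_zero, ← conjTranspose_eq_zero, conjTranspose_mul,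
      conjTranspose_conjTranspose, hZ.eq] at this
    exact this
  refine ⟨1 - S * R, hZ, hZZ, hNZ, hZN, isUnit_toLin'_iff.1 <|
    (LinearMap.isUnit_iff_ker_eq_bot _).2 <| LinearMap.ker_eq_bot'.2 fun x hx => ?_⟩
  rw [toLin'_apply] at hx
  have hZx : (1 - S * R) *ᵥ x = 0 := by
    rw [← hZZ, ← sub_zero ((1 - S * R) * (1 - S * R)), ← hZN, ← mul_sub, ← mulVec_mulVec, hx,
      mulVec_zero]
  have hRx : R *ᵥ x = 0 := by
    have hNx : N *ᵥ x = 0 := by rwa [sub_mulVec, hZx, zero_sub, neg_eq_zero] at hx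
    rw [← conjTranspose_mul_self_mulVec_eq_zero, hR.eq, hRR, ← mulVec_mulVec, hNx, mulVec_zero]
  rwa [sub_mulVec, one_mulVec, ← mulVec_mulVec, hRx, mulVec_zero, sub_zero] at hZx

theorem star_eq_neg_of_re_eq_zero (hl : l.re = 0) : star l = -l := by
  rw [Complex.star_def, eq_neg_iff_add_eq_zero, add_comm, Complex.add_conj, hl, mul_zero,
    Complex.ofReal_zero]

theorem exists_tendsto_smul_inv_of_dissipative (hl : l.re = 0) (ha : (-(a + aᴴ)).PosSemidef) :
    ∃ Z : Matrix n n ℂ, Z.PosSemidef ∧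
      Tendsto (fun s : ℂ => (s - l) • (s • 1 - a)⁻¹) (𝓝[≠] l) (𝓝 Z) := by
  obtain ⟨N, rfl⟩ : ∃ N, a = N + l • 1 := ⟨_, (sub_add_cancel a _).symm⟩
  have hN : (-(N + Nᴴ)).PosSemidef := by
    convert ha using 2
    rw [conjTranspose_add, conjTranspose_smul, conjTranspose_one, star_eq_neg_of_re_eq_zero hl,
      neg_smul]
    abel
  obtain ⟨Z, hZ, hZZ, hNZ, hZN, hunit⟩ := exists_projection_of_dissipative hN
  have hdet := (isUnit_iff_isUnit_det _).1 hunit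
  have hEF : (l • 1 - (N + l • 1)) * (Z - N)⁻¹ + Z * (Z - N)⁻¹ = 1 := by
    rw [sub_add_cancel_right, ← add_mul, neg_add_eq_sub, mul_nonsing_inv _ hdet]
  have hlim : Tendsto (fun s : ℂ => (s - l) • (1 * (s • 1 - (N + l • 1))⁻¹ * Z)) (𝓝[≠] l)
      (𝓝 Z) := by
    refine tendsto_const_nhds.congr' ?_
    filter_upwards [eventually_notMem_spectrum (N + l • 1) l] with s hs
    have : (s • 1 - (N + l • 1)) * Z = (s - l) • Z := by
      rw [sub_mul, add_mul, hNZ, zero_add, smul_mul_assoc, smul_mul_assoc, one_mul, sub_smul]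
    rw [one_mul, ← mul_smul_comm, ← this, nonsing_inv_mul_cancel_left _ _
      (isUnit_det_smul_one_sub hs)]
  have hZinv : Z * (Z - N)⁻¹ = Z := by
    have hZ' : Z * (Z - N) = Z := by rw [mul_sub, hZZ, hZN, sub_zero]
    nth_rw 1 [← hZ', mul_nonsing_inv_cancel_right _ _ hdet]
  refine ⟨Z, ?_, ?_⟩
  · simpa only [hZ.eq, hZZ] using posSemidef_conjTranspose_mul_self Z
  · simpa only [one_mul, hZinv] using tendsto_smul_mul_inv hEF hlim

theorem exists_tendsto_smul_mul_inv_of_dissipative (hP : P.PosDef) (hl : l.re = 0)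
    (hPa : (-(P * a + aᴴ * P)).PosSemidef) :
    ∃ Z : Matrix n n ℂ, Z.PosSemidef ∧
      Tendsto (fun s : ℂ => (s - l) • (P * (s • 1 - a)⁻¹)) (𝓝[≠] l) (𝓝 Z) := by
  obtain ⟨R, -, hR, -, rfl, -, -⟩ := exists_sqrt_pinv hP.posSemidef
  have hdet : IsUnit R.det := (isUnit_iff_isUnit_det _).1 (isUnit_of_mul_isUnit_left hP.isUnit)
  have hdiss : (-(R * a * R⁻¹ + (R * a * R⁻¹)ᴴ)).PosSemidef := by
    convert hPa.conjTranspose_mul_mul_same R⁻¹ using 1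
    simp only [conjTranspose_mul, conjTranspose_nonsing_inv, hR.eq, mul_neg, neg_mul, mul_add,
      add_mul, mul_assoc, nonsing_inv_mul_cancel_left _ _ hdet, mul_nonsing_inv _ hdet, mul_one]
  obtain ⟨Z, hZ, hlim⟩ := exists_tendsto_smul_inv_of_dissipative hl hdiss
  refine ⟨Rᴴ * Z * R, hZ.conjTranspose_mul_mul_same R, ?_⟩
  have hcont : Continuous fun M : Matrix n n ℂ => Rᴴ * M * R := by fun_prop
  refine ((hcont.tendsto Z).comp hlim).congr fun s => ?_
  have hsim : s • 1 - R * a * R⁻¹ = R * (s • 1 - a) * R⁻¹ := by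
    rw [mul_sub, sub_mul, mul_smul_comm, smul_mul_assoc, mul_one, mul_nonsing_inv _ hdet]
  rw [Function.comp_apply, hsim]
  simp only [Matrix.mul_inv_rev, nonsing_inv_nonsing_inv _ hdet, mul_smul_comm,
    smul_mul_assoc, hR.eq, mul_assoc, nonsing_inv_mul _ hdet, mul_one]

end Dissipative

namespace IsKYPSolution
variable {n m : Type*} [Fintype n] [DecidableEq n] {a P : Matrix n n ℂ} {b : Matrix n m ℂ}
  {c : Matrix m n ℂ}

theorem re_nonpos_of_mem_spectrum (h : IsKYPSolution a b c P) (hP : P.PosDef) {μ : ℂ}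
    (hμ : μ ∈ spectrum ℂ a) : μ.re ≤ 0 := by
  obtain ⟨v, hv0, hv⟩ := mem_spectrum_iff_exists_mulVec_eq_smul.1 hμ
  have := h.posSemidef.dotProduct_mulVec_nonneg v
  rw [star_dotProduct_mulVec_eq_of_mulVec_eq_smul hv] at this
  have := nonneg_of_smul_nonneg_of_pos_right this (hP.dotProduct_mulVec_pos hv0)
  linarith

variable [Finite m]

theorem posSemidef_transferMatrix_add_conjTranspose (h : IsKYPSolution a b c P) {s : ℂ}
    (hs : s.re = 0) (hsa : s ∉ spectrum ℂ a) :
    (transferMatrix a b c s + (transferMatrix a b c s)ᴴ).PosSemidef := by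
  obtain ⟨X, hX⟩ : ∃ X, X = (s • 1 - a)⁻¹ * b := ⟨_, rfl⟩
  have haX : a * X = s • X - b := by
    have : (s • 1 - a) * X = b := by
      rw [hX, mul_nonsing_inv_cancel_left _ _ (isUnit_det_smul_one_sub hsa)]
    rw [← this, Matrix.sub_mul, Matrix.smul_mul, Matrix.one_mul, sub_sub_cancel]
  have hXa : Xᴴ * aᴴ = -(s • Xᴴ) - bᴴ := by
    rw [← conjTranspose_mul, haX, conjTranspose_sub, conjTranspose_smul,
      star_eq_neg_of_re_eq_zero hs, neg_smul]
  convert h.posSemidef.conjTranspose_mul_mul_same X using 1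
  calc transferMatrix a b c s + (transferMatrix a b c s)ᴴ = c * X + Xᴴ * cᴴ := by
        rw [transferMatrix, Matrix.mul_assoc, ← hX, conjTranspose_mul]
    _ = bᴴ * P * X + Xᴴ * (P * b) := by rw [h.mul_eq, ← h.eq_conjTranspose_mul]
    _ = -(Xᴴ * P * (s • X - b) + (-(s • Xᴴ) - bᴴ) * P * X) := by
        simp only [Matrix.mul_sub, Matrix.sub_mul, Matrix.mul_smul, Matrix.smul_mul,
          Matrix.neg_mul, Matrix.mul_assoc]
        abel
    _ = Xᴴ * -(P * a + aᴴ * P) * X := by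
        rw [← haX, ← hXa]
        simp only [Matrix.mul_add, Matrix.add_mul, Matrix.mul_neg, Matrix.neg_mul,
          Matrix.mul_assoc]

theorem isPositiveRealOnAxis (h : IsKYPSolution a b c P) (hP : P.PosDef) :
    IsPositiveRealOnAxis a b c where
  posSemidef ω _ hω := h.posSemidef_transferMatrix_add_conjTranspose (by simp) hω
  residue ω _ _ := by
    obtain ⟨Z, hZ, hlim⟩ :=
      exists_tendsto_smul_mul_inv_of_dissipative hP (l := I * ω) (by simp) h.posSemidef
    have hcont : Continuous fun M : Matrix n n ℂ => bᴴ * M * b := by fun_prop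
    refine ⟨bᴴ * Z * b, ((hcont.tendsto Z).comp hlim).congr fun s => ?_,
      hZ.conjTranspose_mul_mul_same b⟩
    simp only [Function.comp_apply, transferMatrix, h.eq_conjTranspose_mul, Matrix.mul_smul,
      Matrix.smul_mul, Matrix.mul_assoc]

end IsKYPSolution

section Rank
variable {k l K : Type*} [Fintype k] [Fintype l] [Field K]

theorem vecMul_injective_of_rank_eq_card {M : Matrix k l K} (h : M.rank = Fintype.card k) :
    Function.Injective M.vecMul := by
  rw [vecMul_injective_iff, linearIndependent_iff_card_eq_finrank_span, Set.finrank,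
    ← rank_eq_finrank_span_row, h]

variable {n m : ℕ} {A : Matrix (Fin n) (Fin n) ℝ} {B : Matrix (Fin n) (Fin m) ℝ}
  {C : Matrix (Fin m) (Fin n) ℝ}

theorem IsMinimal.isControllable (h : IsMinimal A B C) : IsControllable A B := by
  intro p hp
  refine vecMul_injective_of_rank_eq_card (h.1.trans (Fintype.card_fin n).symm) ?_
  simp only [zero_vecMul]
  exact funext fun kj => congr_fun (hp kj.1) kj.2

theorem IsMinimal.isObservable (h : IsMinimal A B C) : IsObservable A C := by
  intro x hx
  refine vecMul_injective_of_rank_eq_card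
    ((rank_transpose _).trans (h.2.trans (Fintype.card_fin n).symm)) ?_
  simp only [vecMul_transpose, mulVec_zero]
  exact funext fun kj => congr_fun (hx kj.1) kj.2

end Rank

section Complexification
variable {n m : Type*} [Fintype n]

theorem vecMul_map_ofReal_re_im (p : n → ℂ) (M : Matrix n m ℝ) (j : m) :
    (p ᵥ* M.map Complex.ofReal) j = ⟨((Complex.re ∘ p) ᵥ* M) j, ((Complex.im ∘ p) ᵥ* M) j⟩ := by
  apply Complex.ext <;> simp [vecMul, dotProduct]

theorem eq_zero_of_vecMul_map_ofReal {ι : Sort*} {M : ι → Matrix n m ℝ}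
    (h : ∀ p : n → ℝ, (∀ i, p ᵥ* M i = 0) → p = 0) {p : n → ℂ}
    (hp : ∀ i, p ᵥ* (M i).map Complex.ofReal = 0) : p = 0 := by
  have hre := h (Complex.re ∘ p) fun i => by
    ext j
    simpa [vecMul_map_ofReal_re_im] using congr_arg Complex.re (congr_fun (hp i) j)
  have him := h (Complex.im ∘ p) fun i => by
    ext j
    simpa [vecMul_map_ofReal_re_im] using congr_arg Complex.im (congr_fun (hp i) j)
  ext j
  exact Complex.ext (congr_fun hre j) (congr_fun him j)

theorem map_ofReal_mul {l : Type*} (M : Matrix l n ℝ) (N : Matrix n m ℝ) :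
    (M * N).map Complex.ofReal = M.map Complex.ofReal * N.map Complex.ofReal :=
  Matrix.map_mul (f := Complex.ofRealHom)

omit [Fintype n] in
theorem conjTranspose_map_ofReal (M : Matrix n m ℝ) :
    (M.map Complex.ofReal)ᴴ = Mᴴ.map Complex.ofReal :=
  (conjTranspose_map _ fun x => (Complex.conj_ofReal x).symm).symm

variable [DecidableEq n]

theorem map_ofReal_pow (M : Matrix n n ℝ) (k : ℕ) :
    (M ^ k).map Complex.ofReal = M.map Complex.ofReal ^ k :=
  Matrix.map_pow M Complex.ofRealHom k

variable {A : Matrix n n ℝ} {B : Matrix n m ℝ} {C : Matrix m n ℝ}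

theorem IsControllable.map_ofReal (h : IsControllable A B) :
    IsControllable (A.map Complex.ofReal) (B.map Complex.ofReal) := fun p hp =>
  eq_zero_of_vecMul_map_ofReal h fun k => by rw [map_ofReal_mul, map_ofReal_pow, hp]

theorem IsObservable.map_ofReal (h : IsObservable A C) :
    IsObservable (A.map Complex.ofReal) (C.map Complex.ofReal) := fun x hx =>
  eq_zero_of_vecMul_map_ofReal (M := fun k => (C * A ^ k)ᵀ)
    (fun p hp => h p fun k => by simpa only [vecMul_transpose] using hp k)
    fun k => by rw [transpose_map, vecMul_transpose, map_ofReal_mul, map_ofReal_pow, hx]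

theorem IsControllable.of_neg_mul {R : Type*} [Ring R] {a : Matrix n n R} {b : Matrix n m R}
    (h : IsControllable a (-(a * b))) : IsControllable a b := fun p hp => h p fun k => by
  rw [Matrix.mul_neg, vecMul_neg, ← Matrix.mul_assoc, ← pow_succ, hp, neg_zero]

end Complexification

section RealKYP
variable {n m : Type*}

open scoped MatrixOrder in
theorem posSemidef_map_ofReal [Finite n] {M : Matrix n n ℝ} (h : M.PosSemidef) :
    (M.map Complex.ofReal).PosSemidef := by
  classical
  have := Fintype.ofFinite n
  obtain ⟨R, rfl⟩ := CStarAlgebra.nonneg_iff_eq_star_mul_self.1 h.nonneg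
  rw [map_ofReal_mul, star_eq_conjTranspose, ← conjTranspose_map_ofReal]
  exact posSemidef_conjTranspose_mul_self _

theorem posDef_map_ofReal [Finite n] {M : Matrix n n ℝ} (h : M.PosDef) :
    (M.map Complex.ofReal).PosDef := by
  classical
  have := Fintype.ofFinite n
  exact (posSemidef_map_ofReal h.posSemidef).posDef_iff_isUnit.2
    (h.isUnit.map Complex.ofRealHom.mapMatrix)

theorem re_star_dotProduct_mulVec_ofReal [Fintype n] (M : Matrix n n ℂ) (x : n → ℝ) :
    (star (Complex.ofReal ∘ x) ⬝ᵥ (M *ᵥ (Complex.ofReal ∘ x))).re =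
      star x ⬝ᵥ (M.map Complex.re *ᵥ x) := by
  simp [dotProduct, mulVec]

theorem conjTranspose_map_re (M : Matrix n m ℂ) : Mᴴ.map Complex.re = (M.map Complex.re)ᴴ :=
  conjTranspose_map _ fun x => Complex.conj_re x

theorem posSemidef_map_re [Finite n] {M : Matrix n n ℂ} (h : M.PosSemidef) :
    (M.map Complex.re).PosSemidef := by
  have := Fintype.ofFinite n
  refine .of_dotProduct_mulVec_nonneg ?_ fun x => ?_
  · rw [IsHermitian, ← conjTranspose_map_re, h.isHermitian.eq]
  · rw [← re_star_dotProduct_mulVec_ofReal]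
    exact (Complex.le_def.1 (h.dotProduct_mulVec_nonneg _)).1

theorem posDef_map_re [Finite n] {M : Matrix n n ℂ} (h : M.PosDef) :
    (M.map Complex.re).PosDef := by
  have := Fintype.ofFinite n
  refine .of_dotProduct_mulVec_pos ?_ fun x hx => ?_
  · rw [IsHermitian, ← conjTranspose_map_re, h.isHermitian.eq]
  · rw [← re_star_dotProduct_mulVec_ofReal]
    refine (Complex.lt_def.1 (h.dotProduct_mulVec_pos fun h0 => hx ?_)).1
    exact Complex.ofReal_injective.comp_left h0

variable [Fintype n]

theorem map_re_mul_map_ofReal {l : Type*} (M : Matrix l n ℂ) (N : Matrix n m ℝ) :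
    (M * N.map Complex.ofReal).map Complex.re = M.map Complex.re * N := by
  ext
  simp [mul_apply]

theorem map_re_map_ofReal_mul {l : Type*} (M : Matrix l n ℝ) (N : Matrix n m ℂ) :
    (M.map Complex.ofReal * N).map Complex.re = M * N.map Complex.re := by
  ext
  simp [mul_apply]

namespace IsKYPSolution
variable {A : Matrix n n ℝ} {B : Matrix n m ℝ} {C : Matrix m n ℝ}

theorem map_ofReal {P : Matrix n n ℝ} (h : IsKYPSolution A B C P) :
    IsKYPSolution (A.map Complex.ofReal) (B.map Complex.ofReal) (C.map Complex.ofReal)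
      (P.map Complex.ofReal) where
  isHermitian := by rw [IsHermitian, conjTranspose_map_ofReal, h.isHermitian.eq]
  posSemidef := by
    convert posSemidef_map_ofReal h.posSemidef using 1
    rw [Matrix.map_neg _ Complex.ofReal_neg, Matrix.map_add _ Complex.ofReal_add, map_ofReal_mul,
      map_ofReal_mul, conjTranspose_map_ofReal]
  mul_eq := by rw [← map_ofReal_mul, h.mul_eq, conjTranspose_map_ofReal]

theorem map_re {P : Matrix n n ℂ} (h : IsKYPSolution (A.map Complex.ofReal) (B.map Complex.ofReal)
      (C.map Complex.ofReal) P) : IsKYPSolution A B C (P.map Complex.re) where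
  isHermitian := by rw [IsHermitian, ← conjTranspose_map_re, h.isHermitian.eq]
  posSemidef := by
    convert posSemidef_map_re h.posSemidef using 1
    rw [Matrix.map_neg _ Complex.neg_re, Matrix.map_add _ Complex.add_re, map_re_mul_map_ofReal,
      conjTranspose_map_ofReal, map_re_map_ofReal_mul]
  mul_eq := by
    rw [← map_re_mul_map_ofReal, h.mul_eq, conjTranspose_map_ofReal]
    ext
    simp

theorem inv {R : Type*} [CommRing R] [PartialOrder R] [StarRing R] [DecidableEq n]
    {a P : Matrix n n R} {b : Matrix n m R} {c : Matrix m n R} (h : IsKYPSolution a b c P)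
    (hP : IsUnit P.det) : IsKYPSolution aᴴ cᴴ bᴴ P⁻¹ where
  isHermitian := h.isHermitian.inv
  posSemidef := by
    convert h.posSemidef.conjTranspose_mul_mul_same P⁻¹ using 1
    rw [h.isHermitian.inv.eq, conjTranspose_conjTranspose]
    simp only [mul_neg, neg_mul, mul_add, add_mul, mul_assoc, nonsing_inv_mul_cancel_left _ _ hP,
      mul_nonsing_inv _ hP, mul_one]
    rw [add_comm]
  mul_eq := by
    rw [conjTranspose_conjTranspose, ← h.mul_eq, nonsing_inv_mul_cancel_left _ _ hP]

end IsKYPSolution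

end RealKYP

section TransferMatrixLimits
variable {n m k : Type*} [Fintype n] [DecidableEq n] {a : Matrix n n ℂ} {b : Matrix n m ℂ}
  {c : Matrix k n ℂ} {s : ℂ}

theorem transferMatrix_neg_mul (hs : s ∉ spectrum ℂ a) :
    transferMatrix a (-(a * b)) c s = c * b - s • transferMatrix a b c s := by
  have hab : -(a * b) = (s • 1 - a) * b - s • b := by
    rw [Matrix.sub_mul, Matrix.smul_mul, Matrix.one_mul, sub_sub_cancel_left]
  rw [transferMatrix, hab, Matrix.mul_sub, ← Matrix.mul_assoc,
    nonsing_inv_mul_cancel_right _ _ (isUnit_det_smul_one_sub hs), Matrix.mul_smul, transferMatrix]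

theorem continuousAt_transferMatrix (hs : s ∉ spectrum ℂ a) :
    ContinuousAt (transferMatrix a b c) s := by
  have hinv : ContinuousAt Inv.inv (s • 1 - a) := continuousAt_matrix_inv _ <| by
    simpa only [Ring.inverse_eq_inv'] using continuousAt_inv₀ (isUnit_det_smul_one_sub hs).ne_zero
  have hres : ContinuousAt (fun s : ℂ => (s • 1 - a)⁻¹) s :=
    hinv.comp (f := fun s : ℂ => s • 1 - a) (by fun_prop)
  have hcont : Continuous fun M : Matrix n n ℂ => c * M * b := by fun_prop
  exact hcont.continuousAt.comp hres

theorem tendsto_inv_smul_one_sub_cobounded (a : Matrix n n ℂ) :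
    Tendsto (fun s : ℂ => (s • 1 - a)⁻¹) (Bornology.cobounded ℂ) (𝓝 0) := by
  let _ : NormedRing (Matrix n n ℂ) := Matrix.linftyOpNormedRing
  let _ : NormedAlgebra ℂ (Matrix n n ℂ) := Matrix.linftyOpNormedAlgebra
  have : CompleteSpace (Matrix n n ℂ) := FiniteDimensional.complete ℂ _
  refine (spectrum.resolvent_tendsto_cobounded (𝕜 := ℂ) a).congr fun s => ?_
  rw [resolvent, Algebra.algebraMap_eq_smul_one, nonsing_inv_eq_ringInverse]

theorem tendsto_transferMatrix_cobounded :
    Tendsto (transferMatrix a b c) (Bornology.cobounded ℂ) (𝓝 0) := by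
  have hcont : Continuous fun M : Matrix n n ℂ => c * M * b := by fun_prop
  exact Tendsto.comp (hcont.tendsto' 0 0 (by simp)) (tendsto_inv_smul_one_sub_cobounded a)

end TransferMatrixLimits

section Conjugation
variable {n m k : Type*} [Fintype n] [DecidableEq n] {a : Matrix n n ℂ} {s : ℂ}

theorem star_mem_spectrum (ha : aᴴᵀ = a) (hs : s ∈ spectrum ℂ a) : star s ∈ spectrum ℂ a := by
  obtain ⟨x, hx0, hx⟩ := mem_spectrum_iff_exists_mulVec_eq_smul.1 hs
  refine mem_spectrum_iff_exists_mulVec_eq_smul.2 ⟨star x, star_ne_zero.2 hx0, ?_⟩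
  rw [← star_smul, ← hx, star_mulVec, ← vecMul_transpose, ← ha, transpose_transpose, ha]

theorem conjTranspose_transpose_transferMatrix (a : Matrix n n ℂ) (b : Matrix n m ℂ)
    (c : Matrix k n ℂ) (s : ℂ) :
    (transferMatrix a b c s)ᴴᵀ = transferMatrix aᴴᵀ bᴴᵀ cᴴᵀ (star s) := by
  simp only [transferMatrix, conjTranspose_mul, transpose_mul, conjTranspose_nonsing_inv,
    transpose_nonsing_inv, conjTranspose_sub, transpose_sub, conjTranspose_smul, transpose_smul,
    conjTranspose_one, transpose_one, Matrix.mul_assoc]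

theorem tendsto_star_nhdsNE (l : ℂ) : Tendsto star (𝓝[≠] star l) (𝓝[≠] l) :=
  tendsto_nhdsWithin_of_tendsto_nhds_of_eventually_within _
    ((continuous_star.tendsto' _ _ (star_star l)).mono_left nhdsWithin_le_nhds)
    (eventually_mem_nhdsWithin.mono fun _ h => by simpa [← star_inj (y := l)] using h)

theorem IsPositiveRealOnAxis.of_forall_pos {b : Matrix n m ℂ} {c : Matrix m n ℂ} (ha : aᴴᵀ = a)
    (hb : bᴴᵀ = b) (hc : cᴴᵀ = c)
    (hpos : ∀ ω : ℝ, 0 < ω → I * ω ∉ spectrum ℂ a →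
      (transferMatrix a b c (I * ω) + (transferMatrix a b c (I * ω))ᴴ).PosSemidef)
    (hres : ∀ ω : ℝ, 0 < ω → I * ω ∈ spectrum ℂ a → ∃ K : Matrix m m ℂ,
      Tendsto (fun s : ℂ => (s - I * ω) • transferMatrix a b c s) (𝓝[≠] (I * ω)) (𝓝 K) ∧
        K.PosSemidef) :
    IsPositiveRealOnAxis a b c := by
  have hstar (ω : ℝ) : star (I * ω) = I * (-ω : ℝ) := by simp
  have hG (s : ℂ) : transferMatrix a b c (star s) = (transferMatrix a b c s)ᴴᵀ := by
    rw [conjTranspose_transpose_transferMatrix, ha, hb, hc]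
  have hconj (M : Matrix m m ℂ) : Mᴴᵀᴴᵀ = M := by
    ext
    simp
  refine ⟨fun ω hω hωa => ?_, fun ω hω hωa => ?_⟩ <;> obtain hω | hω := hω.lt_or_gt
  · have h := hpos (-ω) (neg_pos.2 hω) fun h => hωa <| by
      simpa [hstar] using star_mem_spectrum ha h
    rw [← hstar, hG] at h
    simpa [hconj, add_comm] using h.transpose
  · exact hpos ω hω hωa
  · obtain ⟨K, hK, hK0⟩ := hres (-ω) (neg_pos.2 hω) (hstar ω ▸ star_mem_spectrum ha hωa)
    have hcont : Continuous fun M : Matrix m m ℂ => Mᴴᵀ := by fun_prop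
    refine ⟨Kᴴᵀ, ?_, hK0.conjTranspose.transpose⟩
    rw [← hstar] at hK
    have hlim := tendsto_star_nhdsNE (star (I * ω))
    rw [star_star] at hlim
    refine ((hcont.tendsto K).comp (hK.comp hlim)).congr fun s => ?_
    rw [Function.comp_apply, Function.comp_apply, hG, ← star_sub, conjTranspose_smul, star_star,
      transpose_smul, hconj]
  · exact hres ω hω hωa

end Conjugation

section RealSymmetric
variable {m : Type*} [Finite m]

theorem eq_transpose_of_posSemidef_map_ofReal {M : Matrix m m ℝ}
    (h : (I • (M.map Complex.ofReal - (M.map Complex.ofReal)ᴴ)).PosSemidef) : M = Mᵀ := by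
  have := Fintype.ofFinite m
  have htrace : (I • (M.map Complex.ofReal - (M.map Complex.ofReal)ᴴ)).trace = 0 := by
    simp [trace]
  rw [h.trace_eq_zero_iff, smul_eq_zero_iff_right Complex.I_ne_zero, sub_eq_zero,
    conjTranspose_map_ofReal, conjTranspose_eq_transpose_of_trivial] at htrace
  exact map_injective Complex.ofReal_injective htrace

theorem eq_transpose_of_tendsto {α : Type*} {f : Filter α} [f.NeBot] {R : α → Matrix m m ℂ}
    {M : Matrix m m ℝ} (hlim : Tendsto R f (𝓝 (M.map Complex.ofReal)))
    (hR : ∀ᶠ t in f, (I • (R t - (R t)ᴴ)).PosSemidef) : M = Mᵀ := by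
  have := Fintype.ofFinite m
  have hcont : Continuous fun N : Matrix m m ℂ => I • (N - Nᴴ) := by fun_prop
  exact eq_transpose_of_posSemidef_map_ofReal
    (isClosed_setOf_posSemidef.mem_of_tendsto ((hcont.tendsto _).comp hlim) hR)

end RealSymmetric

section NegativeImaginary
variable {m : Type*} {M K : Matrix m m ℂ} {ω : ℝ}

theorem posSemidef_ofReal_smul_iff (hω : 0 < ω) : ((ω : ℂ) • K).PosSemidef ↔ K.PosSemidef := by
  refine ⟨fun h => ?_, fun h => h.smul (Complex.zero_le_real.2 hω.le)⟩
  have hinv := h.smul (Complex.zero_le_real.2 (inv_pos.2 hω).le)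
  rwa [smul_smul, ← Complex.ofReal_mul, inv_mul_cancel₀ hω.ne', Complex.ofReal_one, one_smul]
    at hinv

theorem posSemidef_I_smul_sub_iff (hM : M.IsHermitian) (hω : 0 < ω) :
    (I • (M - (I * ω) • K - (M - (I * ω) • K)ᴴ)).PosSemidef ↔ (K + Kᴴ).PosSemidef := by
  have hstar : star (I * (ω : ℂ)) = -(I * ω) := star_eq_neg_of_re_eq_zero (by simp)
  have hsmul : I • (M - (I * ω) • K - (M - (I * ω) • K)ᴴ) = (ω : ℂ) • (K + Kᴴ) := by
    rw [conjTranspose_sub, conjTranspose_smul, hM.eq, hstar, sub_sub_sub_cancel_left, neg_smul,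
      ← neg_add', ← smul_add, smul_neg, smul_smul, ← neg_smul, ← mul_assoc, Complex.I_mul_I,
      neg_one_mul, neg_neg, add_comm]
  rw [hsmul, posSemidef_ofReal_smul_iff hω]

theorem tendsto_smul_I_smul_sub_iff {G : ℂ → Matrix m m ℂ} (hω : ω ≠ 0) :
    Tendsto (fun s : ℂ => (s - I * ω) • I • (M - s • G s)) (𝓝[≠] (I * ω)) (𝓝 ((ω : ℂ) • K)) ↔
      Tendsto (fun s : ℂ => (s - I * ω) • G s) (𝓝[≠] (I * ω)) (𝓝 K) := by
  have hs : Tendsto (fun s : ℂ => I * s) (𝓝[≠] (I * ω)) (𝓝 (-ω)) := by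
    refine (Continuous.tendsto' (by fun_prop) _ _ ?_).mono_left nhdsWithin_le_nhds
    rw [← mul_assoc, Complex.I_mul_I, neg_one_mul]
  have hM : Tendsto (fun s : ℂ => (s - I * ω) • I • M) (𝓝[≠] (I * ω)) (𝓝 0) := by
    simpa using (tendsto_sub_self (I * ω)).smul_const (I • M)
  have hsplit (s : ℂ) : (s - I * ω) • I • (M - s • G s) =
      (s - I * ω) • I • M - (I * s) • (s - I * ω) • G s := by
    rw [smul_sub, smul_sub, smul_smul I, smul_comm (I * s)]
  simp only [hsplit]
  refine ⟨fun h => ?_, fun h => by simpa using hM.sub (hs.smul h)⟩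
  have hω' : -(ω : ℂ) ≠ 0 := by simpa using hω
  have hlim := (hs.inv₀ hω').smul (hM.sub h)
  rw [zero_sub, ← neg_smul, inv_smul_smul₀ hω'] at hlim
  refine hlim.congr' ((hs.eventually_ne hω').mono fun s hs0 => ?_)
  rw [sub_sub_cancel, inv_smul_smul₀ hs0]

end NegativeImaginary

section StateSpace
variable {n m : ℕ} {A : Matrix (Fin n) (Fin n) ℝ} {B : Matrix (Fin n) (Fin m) ℝ}
  {C : Matrix (Fin m) (Fin n) ℝ} {D : Matrix (Fin m) (Fin m) ℝ} {s : ℂ}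

theorem zero_notMem_eigs : (0 : ℂ) ∉ eigs A ↔ A.det ≠ 0 := by
  rw [eigs, spectrum.zero_notMem_iff, isUnit_iff_isUnit_det, isUnit_iff_ne_zero, ne_eq, ne_eq,
    ← Complex.ofReal_eq_zero (z := A.det)]
  exact not_congr (by rw [← Complex.ofRealHom_eq_coe, RingHom.map_det]; rfl)

theorem tf_neg_mul (hs : s ∉ eigs A) :
    tf A (-(A * B)) C D s = (C * B + D).map Complex.ofReal - s •
      transferMatrix (A.map Complex.ofReal) (B.map Complex.ofReal) (C.map Complex.ofReal) s := by
  have h := transferMatrix_neg_mul (b := B.map Complex.ofReal) (c := C.map Complex.ofReal) hs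
  rw [← map_ofReal_mul, ← map_ofReal_mul, ← Matrix.map_neg _ Complex.ofReal_neg] at h
  rw [Matrix.map_add _ Complex.ofReal_add, add_sub_right_comm, ← h]
  rfl

theorem IsNI.eq_transpose (h : IsNI A B C D) : D = Dᵀ := by
  have hcob : Tendsto (fun ω : ℝ => I * ω) atTop (Bornology.cobounded ℂ) := by
    refine tendsto_norm_atTop_iff_cobounded.1 ?_
    simpa using tendsto_abs_atTop_atTop
  have hG := (tendsto_transferMatrix_cobounded (a := A.map Complex.ofReal)
    (b := B.map Complex.ofReal) (c := C.map Complex.ofReal)).comp hcob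
  have hlim := hG.add_const (D.map Complex.ofReal)
  rw [zero_add] at hlim
  have heigs : ∀ᶠ ω : ℝ in atTop, I * ω ∉ eigs A :=
    hcob.eventually (Bornology.isBounded_def.1 (finite_spectrum (A.map Complex.ofReal)).isBounded)
  refine eq_transpose_of_tendsto hlim ?_
  filter_upwards [eventually_gt_atTop 0, heigs] with ω hω hωA
  exact h.2.1 ω hω hωA

theorem IsNI.mul_add_eq_transpose (h : IsNI A (-(A * B)) C D) : C * B + D = (C * B + D)ᵀ := by
  have hI : Tendsto (fun ω : ℝ => I * ω) (𝓝[>] 0) (𝓝[≠] 0) := by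
    simpa using (tendsto_I_mul_ofReal 0).mono_left (nhdsGT_le_nhdsNE 0)
  have heigs : ∀ᶠ ω : ℝ in 𝓝[>] 0, I * ω ∉ eigs A :=
    hI.eventually (eventually_notMem_spectrum _ 0)
  have hG := continuousAt_transferMatrix (b := B.map Complex.ofReal) (c := C.map Complex.ofReal)
    fun h0 => (h.1 0 h0).1 rfl
  have hlim := ((tendsto_id.smul hG).const_sub ((C * B + D).map Complex.ofReal)).comp
    (hI.mono_right nhdsWithin_le_nhds)
  rw [zero_smul, sub_zero] at hlim
  refine eq_transpose_of_tendsto hlim ?_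
  filter_upwards [self_mem_nhdsWithin, heigs] with ω hω hωA
  rw [Function.comp_apply, id_eq, ← tf_neg_mul hωA]
  exact h.2.1 ω hω hωA

theorem conjTranspose_transpose_map_ofReal {k l : Type*} (M : Matrix k l ℝ) :
    (M.map Complex.ofReal)ᴴᵀ = M.map Complex.ofReal := by
  ext
  simp

theorem exists_residue_tf_neg_mul_iff {ω : ℝ} (hω : 0 < ω) :
    (∃ K : Matrix (Fin m) (Fin m) ℂ,
      Tendsto (fun s : ℂ => (s - I * ω) • I • tf A (-(A * B)) C D s) (𝓝[≠] (I * ω)) (𝓝 K) ∧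
        K.PosSemidef) ↔
    ∃ K : Matrix (Fin m) (Fin m) ℂ,
      Tendsto (fun s : ℂ => (s - I * ω) • transferMatrix (A.map Complex.ofReal)
        (B.map Complex.ofReal) (C.map Complex.ofReal) s) (𝓝[≠] (I * ω)) (𝓝 K) ∧
        K.PosSemidef := by
  have htf := (eventually_notMem_spectrum (A.map Complex.ofReal) (I * ω)).mono fun s hs =>
    congr_arg (fun M => (s - I * ω) • I • M) (tf_neg_mul (B := B) (C := C) (D := D) hs)
  simp only [tendsto_congr' htf]
  constructor
  · rintro ⟨K, hK, hK0⟩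
    obtain ⟨K, rfl⟩ : ∃ L, (ω : ℂ) • L = K :=
      ⟨(ω : ℂ)⁻¹ • K, smul_inv_smul₀ (by simpa using hω.ne') K⟩
    exact ⟨K, (tendsto_smul_I_smul_sub_iff hω.ne').1 hK, (posSemidef_ofReal_smul_iff hω).1 hK0⟩
  · rintro ⟨K, hK, hK0⟩
    exact ⟨(ω : ℂ) • K, (tendsto_smul_I_smul_sub_iff hω.ne').2 hK,
      (posSemidef_ofReal_smul_iff hω).2 hK0⟩

theorem isNI_neg_mul_iff (hCBD : C * B + D = (C * B + D)ᵀ) :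
    IsNI A (-(A * B)) C D ↔ (∀ μ ∈ eigs A, μ ≠ 0 ∧ μ.re ≤ 0) ∧
      IsPositiveRealOnAxis (A.map Complex.ofReal) (B.map Complex.ofReal)
        (C.map Complex.ofReal) := by
  have hherm : ((C * B + D).map Complex.ofReal).IsHermitian := by
    rw [IsHermitian, conjTranspose_map_ofReal, conjTranspose_eq_transpose_of_trivial, ← hCBD]
  refine and_congr_right fun _ => ⟨fun ⟨hpos, hpole⟩ => ?_, fun hpr => ⟨fun ω hω hωA => ?_, ?_⟩⟩
  · refine .of_forall_pos (conjTranspose_transpose_map_ofReal A)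
      (conjTranspose_transpose_map_ofReal B) (conjTranspose_transpose_map_ofReal C)
      (fun ω hω hωA => ?_)
      fun ω hω hωA => (exists_residue_tf_neg_mul_iff hω).1 (hpole ω hω hωA)
    rw [← posSemidef_I_smul_sub_iff hherm hω, ← tf_neg_mul hωA]
    exact hpos ω hω hωA
  · rw [tf_neg_mul hωA, posSemidef_I_smul_sub_iff hherm hω]
    exact hpr.posSemidef ω hω.ne' hωA
  · exact fun ω hω hωA => (exists_residue_tf_neg_mul_iff hω).2 (hpr.residue ω hω.ne' hωA)

theorem isNI_neg_mul_iff_exists_isKYPSolution (hmin : IsMinimal A (-(A * B)) C) (hdet : A.det ≠ 0)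
    (hCBD : C * B + D = (C * B + D)ᵀ) : IsNI A (-(A * B)) C D ↔
      ∃ P : Matrix (Fin n) (Fin n) ℝ, P.PosDef ∧ IsKYPSolution A B C P := by
  rw [isNI_neg_mul_iff hCBD]
  constructor
  · rintro ⟨hspec, hpr⟩
    have hAB := hmin.isControllable.of_neg_mul.map_ofReal
    obtain ⟨P, hP⟩ := exists_isKYPSolution hAB (hpr.frequencyDomainInequality hAB)
    exact ⟨P.map Complex.re, posDef_map_re (hP.posDef hAB hmin.isObservable.map_ofReal hpr hspec),
      hP.map_re⟩
  · rintro ⟨P, hP, hKYP⟩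
    exact ⟨fun μ hμ => ⟨ne_of_mem_of_not_mem hμ (zero_notMem_eigs.2 hdet),
      hKYP.map_ofReal.re_nonpos_of_mem_spectrum (posDef_map_ofReal hP) hμ⟩,
      hKYP.map_ofReal.isPositiveRealOnAxis (posDef_map_ofReal hP)⟩

theorem exists_posDef_isKYPSolution_iff :
    (∃ P : Matrix (Fin n) (Fin n) ℝ, P.PosDef ∧ IsKYPSolution A B C P) ↔
      ∃ Y : Matrix (Fin n) (Fin n) ℝ,
        Y.PosDef ∧ (-(A * Y + Y * Aᵀ)).PosSemidef ∧ B = Y * Cᵀ := by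
  simp only [← conjTranspose_eq_transpose_of_trivial]
  constructor
  · rintro ⟨P, hP, hKYP⟩
    have hY := hKYP.inv hP.det_pos.ne'.isUnit
    refine ⟨P⁻¹, hP.inv, ?_, by simpa using hY.mul_eq.symm⟩
    simpa [add_comm] using hY.posSemidef
  · rintro ⟨Y, hY, hlyap, hB⟩
    have hKYP : IsKYPSolution Aᴴ Cᴴ Bᴴ Y :=
      ⟨hY.isHermitian, by simpa [add_comm] using hlyap, by simpa using hB.symm⟩
    exact ⟨Y⁻¹, hY.inv, by simpa using hKYP.inv hY.det_pos.ne'.isUnit⟩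

end StateSpace

/-- The Negative Imaginary Lemma. -/
theorem negative_imaginary_lemma {n m : ℕ}
    (A : Matrix (Fin n) (Fin n) ℝ) (B : Matrix (Fin n) (Fin m) ℝ)
    (C : Matrix (Fin m) (Fin n) ℝ) (D : Matrix (Fin m) (Fin m) ℝ)
    (hmin : IsMinimal A B C) :
    IsNI A B C D ↔
      ((A.det ≠ 0 ∧ D = Dᵀ) ∧
        ∃ Y : Matrix (Fin n) (Fin n) ℝ, Y.PosDef ∧
          (-(A * Y + Y * Aᵀ)).PosSemidef ∧ B + A * Y * Cᵀ = 0) := by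
  constructor
  · intro hNI
    have hdet : A.det ≠ 0 := zero_notMem_eigs.1 fun h0 => (hNI.1 0 h0).1 rfl
    obtain ⟨B, rfl⟩ : ∃ B', B = -(A * B') :=
      ⟨-(A⁻¹ * B), by rw [Matrix.mul_neg, neg_neg, mul_nonsing_inv_cancel_left _ _ hdet.isUnit]⟩
    have hKYP := (isNI_neg_mul_iff_exists_isKYPSolution hmin hdet hNI.mul_add_eq_transpose).1 hNI
    obtain ⟨Y, hY, hlyap, rfl⟩ := exists_posDef_isKYPSolution_iff.1 hKYP
    exact ⟨⟨hdet, hNI.eq_transpose⟩, Y, hY, hlyap, by rw [Matrix.mul_assoc, neg_add_cancel]⟩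
  · rintro ⟨⟨hdet, hD⟩, Y, hY, hlyap, hB⟩
    obtain rfl : B = -(A * (Y * Cᵀ)) := by rw [← Matrix.mul_assoc, eq_neg_of_add_eq_zero_left hB]
    have hsymm : C * (Y * Cᵀ) + D = (C * (Y * Cᵀ) + D)ᵀ := by
      have hYT : Yᵀ = Y := hY.isHermitian.eq
      rw [transpose_add, transpose_mul, transpose_mul, transpose_transpose, hYT, ← hD,
        Matrix.mul_assoc]
    exact (isNI_neg_mul_iff_exists_isKYPSolution hmin hdet hsymm).2
      (exists_posDef_isKYPSolution_iff.2 ⟨Y, hY, hlyap, rfl⟩)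
end
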